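/- Theorem 2.1(i) (active-regime linearity). For each of the one-dimensional East model, the FA-1f model with two empty boundaries, and the FA-1f model with one empty (right) boundary, at any density ρ∈(0,1), there exists α₀<0 such that for every α>α₀ one has limsup_{N→∞} φ^{(N)}(α/N) = 𝔸·α (and in this regime the limit in N exists and equals 𝔸·α), where 𝔸 is the mean instantaneous activity of the corresponding model. -/

import Mathlib

/-!
Write `g = √f`, so that `ν(g²) = 1` and the variational functional is
`(e^λ - 1) ν(g² 𝓗) - e^λ 𝒟(g)` with `λ = α / N`. The constant density gives the lower bound
`(e^λ - 1) ν(𝓗) ≈ α 𝔸`, and everything rests on comparing `ν(g² 𝓗)` with `N 𝔸` for general `g`,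
with errors paid for by `𝒟(g)`.

*Local equilibrium.* Where a site may flip, the law of its occupation variable under `g² ν` is
Bernoulli up to `δ + δ⁻¹ ×` (Dirichlet energy of the site), by `two_point_bound`. Used for the
rates (`escRate_facilitated`) and for the second neighbour in the FA-1f constraint
(`facilitated_empMass`), this shows that `ν(g² 𝓗)` is proportional to the expected number of empty
sites `empMass ρ g`, up to `N δ` plus a multiple of `1 + 𝒟(g)` independent of `N`.

*Upper bound on the empty sites* (`empMass_le`). An empty site with another empty site within
distance `k + 1` to its right is in local equilibrium for the constraint relaxed to that distance,
whose Dirichlet form is bounded by the East one, hence by those of all three models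
(`sum_runE_le`, `sum_runE_le_dirichlet`). The other empty sites are followed by more than `k`
particles, and there are at most `N / (k + 1)` of them (`count_long_runs`).

*Lower bound on the empty sites* (`le_empMass`). It follows from a Poincaré inequality for the
East constraint with a constant `K` independent of `N` (`variance_le`): the variance of `g` is
at most `K M 𝒟(g)` for a constant `M`, so the density is close to that of `ν` up to a loss
`C 𝒟(g) N` where `C` does not depend on the precision `δ`. The Poincaré inequality is proved by
decomposing the variance along averages over the sites from the right end. In each increment one
separates the event that a hole is within distance `l + 1` to the right. On it the increment is an
energy of the relaxed East model; its complement has probability `ρ ^ (l + 1)` and depends on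
`l + 1` sites only, so that its contribution is a small multiple of the variance itself. Emptying
and refilling intermediate sites then reduces the relaxed constraint to the true one.

*Conclusion* (`tendsto_phi`). For `α ≥ 0` the upper bound is used, and the error `O(1 / N) 𝒟(g)`
is absorbed by `-e^λ 𝒟(g)`. For `α < 0` the lower bound is used, and the error becomes
`(|α| C + o(1)) 𝒟(g)`, which is absorbed as soon as `α > -1 / C`. This is the choice of `α₀`.
-/

open Finset Filter

open scoped Classical

/-- A configuration on the box `{1,…,N}` (0-indexed by `Fin N`). -/
abbrev Config (N : ℕ) := Fin N → Bool

/-- Occupation variable `η_i ∈ {0,1}` as a real number. -/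
noncomputable def occ {N : ℕ} (η : Config N) (i : Fin N) : ℝ := if η i then 1 else 0

/-- Bernoulli(ρ) product weight of a configuration. -/
noncomputable def bern (ρ : ℝ) {N : ℕ} (η : Config N) : ℝ :=
  ∏ i, (if η i then ρ else 1 - ρ)

/-- Expectation under the Bernoulli(ρ) product measure `ν`. -/
noncomputable def expect (ρ : ℝ) {N : ℕ} (f : Config N → ℝ) : ℝ :=
  ∑ η : Config N, bern ρ η * f η

/-- The configuration `η^i`, obtained by flipping `η` at site `i`. -/
def flipAt {N : ℕ} (η : Config N) (i : Fin N) : Config N :=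
  Function.update η i (!η i)

/-- Occupation at the 1-indexed position `k ∈ {0,…,N+1}`, with boundary value
`bl` at `k = 0` and `br` at `k = N+1` (and beyond). -/
noncomputable def occAt {N : ℕ} (η : Config N) (bl br : ℝ) (k : ℕ) : ℝ :=
  if hk : k = 0 then bl
  else if h : k ≤ N then (if η ⟨k - 1, by omega⟩ then 1 else 0) else br

/-- The three kinetically constrained models considered: East (empty right boundary),
FA-1f with two empty boundaries, FA-1f with one empty (right) boundary. -/
inductive KCM | east | fa2 | fa1

/-- The kinetic constraint `r_i(η)` of each model, at the (0-indexed) site `i`. -/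
noncomputable def constr (m : KCM) {N : ℕ} (η : Config N) (i : Fin N) : ℝ :=
  match m with
  | KCM.east => 1 - occAt η 0 0 (i.1 + 2)
  | KCM.fa2  => 1 - occAt η 0 0 i.1 * occAt η 0 0 (i.1 + 2)
  | KCM.fa1  => 1 - occAt η 1 0 i.1 * occAt η 1 0 (i.1 + 2)

/-- The jump rate `c_i(η) = r_i(η)·[η_i(1−ρ)+(1−η_i)ρ]`. -/
noncomputable def crate (m : KCM) (ρ : ℝ) {N : ℕ} (η : Config N) (i : Fin N) : ℝ :=
  constr m η i * (if η i then 1 - ρ else ρ)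

/-- The escape rate `𝓗(η) = Σ_i c_i(η)`. -/
noncomputable def escRate (m : KCM) (ρ : ℝ) {N : ℕ} (η : Config N) : ℝ :=
  ∑ i, crate m ρ η i

/-- The Dirichlet form `𝒟_N(g) = Σ_i ν(c_i(η)(g(η^i)−g(η))²)`. -/
noncomputable def dirichlet (m : KCM) (ρ : ℝ) {N : ℕ} (g : Config N → ℝ) : ℝ :=
  ∑ i, expect ρ (fun η => crate m ρ η i * (g (flipAt η i) - g η) ^ 2)

/-- The rescaled cumulant generating function `φ^{(N)}(λ)`, via the
Donsker–Varadhan variational (principal eigenvalue) formula. -/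
noncomputable def phi (m : KCM) (ρ : ℝ) (N : ℕ) (lam : ℝ) : ℝ :=
  sSup { x | ∃ f : Config N → ℝ, (∀ η, 0 ≤ f η) ∧ expect ρ f = 1 ∧
    x = (Real.exp lam - 1) * expect ρ (fun η => f η * escRate m ρ η)
        - Real.exp lam * dirichlet m ρ (fun η => Real.sqrt (f η)) }

/-- The mean instantaneous activity `𝔸 = ν(c_j)` at an interior site `j`:
`2ρ(1−ρ)²` for East and `2ρ(1−ρ)(1−ρ²)` for FA-1f. -/
noncomputable def meanAct (m : KCM) (ρ : ℝ) : ℝ :=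
  match m with
  | KCM.east => 2 * ρ * (1 - ρ) ^ 2
  | _ => 2 * ρ * (1 - ρ) * (1 - ρ ^ 2)

/-- The two-boundary interface energy `Σ_{L,L'}` for FA-1f with two empty
boundaries: the infimum of `𝒟_{L+L'+2}(√f)` over probability densities `f`
with `ν(f·η_{L+1}η_{L+2}) = 1`. -/
noncomputable def SigmaTwo (ρ : ℝ) (L L' : ℕ) : ℝ :=
  sInf { x | ∃ f : Config (L + L' + 2) → ℝ, (∀ η, 0 ≤ f η) ∧ expect ρ f = 1 ∧
    expect ρ (fun η => f η * occ η ⟨L, by omega⟩ * occ η ⟨L + 1, by omega⟩) = 1 ∧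
    x = dirichlet KCM.fa2 ρ (fun η => Real.sqrt (f η)) }

/-- The one-boundary interface energy `Σ_L`: the infimum of `𝒟_L(√f)`
over probability densities `f` with `ν(f·η_1) = 1`, for the model `m`. -/
noncomputable def SigmaOne (m : KCM) (ρ : ℝ) (L : ℕ) : ℝ :=
  sInf { x | ∃ f : Config L → ℝ, (∀ η, 0 ≤ f η) ∧ expect ρ f = 1 ∧
    expect ρ (fun η => f η * occAt η 0 0 1) = 1 ∧
    x = dirichlet m ρ (fun η => Real.sqrt (f η)) }

/-- The Bernoulli expectation; the open namespace `Finset` has an `expect` of its own. -/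
local notation "𝐄" => (_root_.expect)

section Tools

variable {N : ℕ} {ρ : ℝ}

/-- The one-site Bernoulli weight. -/
noncomputable def siteW (ρ : ℝ) (b : Bool) : ℝ := if b then ρ else 1 - ρ

/-- Resampling of the site `i`: the conditional expectation given all other sites. -/
noncomputable def resamp (ρ : ℝ) (i : Fin N) (u : Config N → ℝ) (η : Config N) : ℝ :=
  siteW ρ (η i) * u η + siteW ρ (!η i) * u (flipAt η i)

/-- `u` does not depend on the site `i`. -/
def Indep (i : Fin N) (u : Config N → ℝ) : Prop := ∀ η, u (flipAt η i) = u η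

lemma flip_same (η : Config N) (i : Fin N) : flipAt η i i = !η i := by simp [flipAt]

lemma flip_ne (η : Config N) {i j : Fin N} (h : j ≠ i) : flipAt η i j = η j := by
  simp [flipAt, h]

lemma flipAt_flipAt (η : Config N) (i : Fin N) : flipAt (flipAt η i) i = η := by
  funext j
  by_cases h : j = i
  · subst h; simp [flip_same]
  · simp [flip_ne _ h]

lemma flip_comm (η : Config N) (i j : Fin N) :
    flipAt (flipAt η i) j = flipAt (flipAt η j) i := by
  by_cases hij : i = j
  · subst hij; rfl
  funext k
  by_cases h : k = i
  · subst h; simp [flip_same, flip_ne _ hij]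
  · by_cases h' : k = j
    · subst h'; simp [flip_same, flip_ne _ h]
    · simp [flip_ne _ h, flip_ne _ h']

lemma siteW_add (ρ : ℝ) (b : Bool) : siteW ρ b + siteW ρ (!b) = 1 := by
  cases b <;> simp [siteW]

lemma siteW_pos (h0 : 0 < ρ) (h1 : ρ < 1) (b : Bool) : 0 < siteW ρ b := by
  cases b <;> simp [siteW] <;> linarith

lemma siteW_le (h0 : 0 < ρ) (h1 : ρ < 1) (b : Bool) : siteW ρ b ≤ 1 := by
  cases b <;> simp [siteW] <;> linarith

lemma siteW_mul (ρ : ℝ) (b : Bool) : siteW ρ b * siteW ρ (!b) = ρ * (1 - ρ) := by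
  cases b <;> simp [siteW]; ring

lemma bern_pos (h0 : 0 < ρ) (h1 : ρ < 1) (η : Config N) : 0 < bern ρ η :=
  Finset.prod_pos fun i _ => by split_ifs <;> linarith

lemma bern_split (ρ : ℝ) (η : Config N) (i : Fin N) :
    bern ρ η = siteW ρ (η i) * ∏ j ∈ univ.erase i, siteW ρ (η j) := by
  rw [mul_prod_erase univ (fun j => siteW ρ (η j)) (mem_univ i)]
  rfl

lemma bern_flip (ρ : ℝ) (η : Config N) (i : Fin N) :
    siteW ρ (η i) * bern ρ (flipAt η i) = siteW ρ (!η i) * bern ρ η := by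
  rw [bern_split ρ η i, bern_split ρ (flipAt η i) i, flip_same]
  have : ∏ j ∈ univ.erase i, siteW ρ (flipAt η i j) = ∏ j ∈ univ.erase i, siteW ρ (η j) :=
    prod_congr rfl fun j hj => by rw [flip_ne _ (ne_of_mem_erase hj)]
  rw [this]; ring

lemma sum_flip (u : Config N → ℝ) (i : Fin N) : ∑ η, u (flipAt η i) = ∑ η, u η :=
  Equiv.sum_comp (Function.Involutive.toPerm (fun η => flipAt η i) fun η => flipAt_flipAt η i) u

/-! ### Elementary properties of the expectation -/

lemma expect_add (u v : Config N → ℝ) :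
    expect ρ (fun η => u η + v η) = expect ρ u + expect ρ v := by
  simp [_root_.expect, mul_add, sum_add_distrib]

lemma expect_sub (u v : Config N → ℝ) :
    expect ρ (fun η => u η - v η) = expect ρ u - expect ρ v := by
  simp [_root_.expect, mul_sub, sum_sub_distrib]

lemma expect_smul (a : ℝ) (u : Config N → ℝ) :
    expect ρ (fun η => a * u η) = a * expect ρ u := by
  simp only [_root_.expect, mul_sum]
  exact sum_congr rfl fun η _ => by ring

lemma expect_sum {ι : Type*} (S : Finset ι) (u : ι → Config N → ℝ) :
    expect ρ (fun η => ∑ k ∈ S, u k η) = ∑ k ∈ S, expect ρ (u k) := by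
  simp only [_root_.expect, mul_sum]
  exact sum_comm

lemma expect_mono (h0 : 0 < ρ) (h1 : ρ < 1) {u v : Config N → ℝ} (h : ∀ η, u η ≤ v η) :
    expect ρ u ≤ expect ρ v :=
  sum_le_sum fun η _ => mul_le_mul_of_nonneg_left (h η) (bern_pos h0 h1 η).le

lemma expect_nonneg (h0 : 0 < ρ) (h1 : ρ < 1) {u : Config N → ℝ} (h : ∀ η, 0 ≤ u η) :
    0 ≤ expect ρ u :=
  sum_nonneg fun η _ => mul_nonneg (bern_pos h0 h1 η).le (h η)

lemma expect_const (c : ℝ) : expect ρ (fun _ : Config N => c) = c := by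
  have h : ∑ η : Config N, bern ρ η = 1 := by
    have := Finset.prod_univ_sum (fun _ : Fin N => (univ : Finset Bool))
      (fun _ b => siteW ρ b)
    simp only [Fintype.piFinset_univ] at this
    unfold bern
    unfold siteW at this
    rw [← this]
    simp
  simp [_root_.expect, ← sum_mul, h]

/-- Flipping a site costs at most a bounded factor in expectation. -/
lemma expect_flip_le (h0 : 0 < ρ) (h1 : ρ < 1) (i : Fin N) {u : Config N → ℝ}
    (hu : ∀ η, 0 ≤ u η) :
    expect ρ (fun η => u (flipAt η i)) ≤ (ρ * (1 - ρ))⁻¹ * expect ρ u := by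
  have hM : 0 < ρ * (1 - ρ) := mul_pos h0 (by linarith)
  have key : expect ρ (fun η => u (flipAt η i)) = ∑ η, bern ρ (flipAt η i) * u η := by
    rw [_root_.expect, ← sum_flip _ i]
    simp only [flipAt_flipAt]
  rw [key, ← expect_smul]
  refine sum_le_sum fun η _ => ?_
  rw [← mul_assoc]
  refine mul_le_mul_of_nonneg_right ?_ (hu η)
  rw [← div_eq_mul_inv, le_div_iff₀ hM, ← siteW_mul ρ (η i)]
  have h2 := bern_flip ρ η i
  have h3 := siteW_pos h0 h1 (!η i)
  have h4 := siteW_le h0 h1 (!η i)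
  have h5 := bern_pos h0 h1 η
  calc bern ρ (flipAt η i) * (siteW ρ (η i) * siteW ρ (!η i))
      = siteW ρ (!η i) * (siteW ρ (η i) * bern ρ (flipAt η i)) := by ring
    _ = siteW ρ (!η i) * (siteW ρ (!η i) * bern ρ η) := by rw [h2]
    _ ≤ 1 * (1 * bern ρ η) := by gcongr
    _ = bern ρ η := by ring

/-! ### The resampling operators -/

lemma indep_resamp (i : Fin N) (u : Config N → ℝ) : Indep i (resamp ρ i u) := by
  intro η
  simp only [resamp, flip_same, flipAt_flipAt, Bool.not_not]
  ring

lemma Indep.resamp {i j : Fin N} {u : Config N → ℝ} (h : Indep i u) :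
    Indep i (resamp ρ j u) := by
  by_cases hij : i = j
  · subst hij; exact indep_resamp _ _
  intro η
  have h' : j ≠ i := fun h => hij h.symm
  simp only [_root_.resamp, flip_ne _ h', flip_comm η i j, h _]

lemma Indep.mul {i : Fin N} {u v : Config N → ℝ} (h : Indep i u) (h' : Indep i v) :
    Indep i (fun η => u η * v η) := fun η => by simp only [h η, h' η]

lemma indep_comp {i j : Fin N} (h : j ≠ i) (φ : Bool → ℝ) :
    Indep i (fun η : Config N => φ (η j)) := fun η => by simp only [flip_ne _ h]

lemma resamp_of_indep {i : Fin N} {w : Config N → ℝ} (hw : Indep i w) (u : Config N → ℝ) :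
    resamp ρ i (fun η => w η * u η) = fun η => w η * resamp ρ i u η := by
  funext η
  simp only [resamp, hw η]
  ring

lemma resamp_self {i : Fin N} {w : Config N → ℝ} (hw : Indep i w) : resamp ρ i w = w := by
  funext η
  simp only [resamp, hw η, ← add_mul, siteW_add, one_mul]

lemma resamp_comm (i j : Fin N) (u : Config N → ℝ) :
    resamp ρ i (resamp ρ j u) = resamp ρ j (resamp ρ i u) := by
  by_cases hij : i = j
  · subst hij; rfl
  have h' : j ≠ i := fun h => hij h.symm
  funext η
  simp only [resamp, flip_ne _ hij, flip_ne _ h', flip_comm η i j]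
  ring

lemma resamp_add (i : Fin N) (u v : Config N → ℝ) :
    resamp ρ i (fun η => u η + v η) = fun η => resamp ρ i u η + resamp ρ i v η := by
  funext η; simp only [resamp]; ring

lemma resamp_sub (i : Fin N) (u v : Config N → ℝ) :
    resamp ρ i (fun η => u η - v η) = fun η => resamp ρ i u η - resamp ρ i v η := by
  funext η; simp only [resamp]; ring

lemma resamp_mono (h0 : 0 < ρ) (h1 : ρ < 1) (i : Fin N) {u v : Config N → ℝ}
    (h : ∀ η, u η ≤ v η) (η : Config N) : resamp ρ i u η ≤ resamp ρ i v η := by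
  have h3 := siteW_pos h0 h1 (!η i)
  have h4 := siteW_pos h0 h1 (η i)
  have h5 := h η
  have h6 := h (flipAt η i)
  simp only [resamp]
  gcongr

/-- Cauchy–Schwarz for a resampling operator. -/
lemma resamp_cs (h0 : 0 < ρ) (h1 : ρ < 1) (i : Fin N) {a b c : Config N → ℝ}
    (hb : ∀ η, 0 ≤ b η) (hc : ∀ η, 0 ≤ c η) (h : ∀ η, a η ^ 2 ≤ b η * c η) (η : Config N) :
    resamp ρ i a η ^ 2 ≤ resamp ρ i b η * resamp ρ i c η := by
  have h3 := siteW_pos h0 h1 (!η i)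
  have h4 := siteW_pos h0 h1 (η i)
  simp only [resamp]
  set x := η
  set y := flipAt η i
  have hx := h x
  have hy := h y
  have h2 : 2 * (a x * a y) ≤ b x * c y + b y * c x := by
    refine le_of_abs_le (abs_le_of_sq_le_sq ?_ (by
      have := mul_nonneg (hb x) (hc y); have := mul_nonneg (hb y) (hc x); linarith))
    have : (a x ^ 2) * (a y ^ 2) ≤ (b x * c x) * (b y * c y) :=
      mul_le_mul hx hy (sq_nonneg _) (mul_nonneg (hb x) (hc x))
    nlinarith [sq_nonneg (b x * c y - b y * c x)]
  have h5 := mul_le_mul_of_nonneg_left hx (sq_nonneg (siteW ρ (x i)))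
  have h6 := mul_le_mul_of_nonneg_left hy (sq_nonneg (siteW ρ (!x i)))
  have h7 := mul_le_mul_of_nonneg_left h2 (mul_pos h3 h4).le
  nlinarith

lemma expect_resamp (i : Fin N) (u : Config N → ℝ) :
    expect ρ (resamp ρ i u) = expect ρ u := by
  have h : ∑ η, bern ρ η * (siteW ρ (!η i) * u (flipAt η i))
      = ∑ η, bern ρ η * (siteW ρ (!η i) * u η) := by
    rw [← sum_flip _ i]
    refine sum_congr rfl fun η _ => ?_
    simp only [flip_same, flipAt_flipAt, Bool.not_not]
    linear_combination u η * bern_flip ρ η i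
  simp only [_root_.expect, resamp, mul_add, sum_add_distrib, h]
  rw [← sum_add_distrib]
  refine sum_congr rfl fun η _ => ?_
  linear_combination bern ρ η * u η * siteW_add ρ (η i)

/-- Pythagoras: resampling is an orthogonal projection. -/
lemma expect_sub_resamp_sq (i : Fin N) (u : Config N → ℝ) :
    expect ρ (fun η => (u η - resamp ρ i u η) ^ 2)
      = expect ρ (fun η => u η ^ 2) - expect ρ (fun η => resamp ρ i u η ^ 2) := by
  have h : expect ρ (fun η => resamp ρ i u η * u η)
      = expect ρ (fun η => resamp ρ i u η ^ 2) := by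
    rw [← expect_resamp i, resamp_of_indep (indep_resamp i u)]
    simp only [sq]
  have e : (fun η => (u η - resamp ρ i u η) ^ 2)
      = fun η => (u η ^ 2 + resamp ρ i u η ^ 2) - 2 * (resamp ρ i u η * u η) := by
    funext η; ring
  rw [e, expect_sub, expect_add, expect_smul, h]
  ring

lemma sub_resamp (i : Fin N) (u : Config N → ℝ) (η : Config N) :
    u η - resamp ρ i u η = - siteW ρ (!η i) * (u (flipAt η i) - u η) := by
  simp only [resamp]
  linear_combination (-u η) * siteW_add ρ (η i)

lemma sub_resamp_sq_le (h0 : 0 < ρ) (h1 : ρ < 1) (i : Fin N) (u : Config N → ℝ)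
    (η : Config N) : (u η - resamp ρ i u η) ^ 2 ≤ (u (flipAt η i) - u η) ^ 2 := by
  rw [sub_resamp, mul_pow, neg_sq]
  have h3 := siteW_pos h0 h1 (!η i)
  have h4 := siteW_le h0 h1 (!η i)
  exact mul_le_of_le_one_left (sq_nonneg _) (pow_le_one₀ h3.le h4)

lemma const_of_indep {u : Config N → ℝ} (h : ∀ i, Indep i u) (η η' : Config N) :
    u η = u η' := by
  have key : ∀ S : Finset (Fin N), u (S.piecewise η' η) = u η := by
    intro S
    induction S using Finset.induction_on with
    | empty => simp
    | insert i S hi ih =>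
      by_cases hη : S.piecewise η' η i = η' i
      · rw [Finset.piecewise_insert, ← hη, Function.update_eq_self, ih]
      · rw [← ih, ← h i (S.piecewise η' η), Finset.piecewise_insert, flipAt]
        congr 2
        cases h1 : η' i <;> cases h2 : S.piecewise η' η i <;> simp_all
  simpa using (key univ).symm

/-! ### Local equilibrium -/

/-- The two-point form of local equilibrium, from `b² - a² = (b + a)(b - a)` and the
arithmetic-geometric mean inequality. -/
lemma two_point_bound (h0 : 0 < ρ) (h1 : ρ < 1) {δ : ℝ} (hδ : 0 < δ) (a b : ℝ) :
    |ρ * (1 - ρ) * (b ^ 2 - a ^ 2)|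
      ≤ δ * (ρ * a ^ 2 + (1 - ρ) * b ^ 2) + δ⁻¹ * (b - a) ^ 2 := by
  have hq : 0 < 1 - ρ := by linarith
  have key : ∀ e : ℝ, e ^ 2 ≤ 1 → e * (ρ * (1 - ρ) * (b ^ 2 - a ^ 2))
      ≤ δ * (ρ * a ^ 2 + (1 - ρ) * b ^ 2) + δ⁻¹ * (b - a) ^ 2 := by
    intro e he
    have hd : δ * δ⁻¹ = 1 := mul_inv_cancel₀ hδ.ne'
    have hi : 0 < δ⁻¹ := inv_pos.2 hδ
    set t := e * (ρ * (1 - ρ)) * (a + b) with ht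
    have h3 : t * (b - a) ≤ δ * t ^ 2 / 2 + δ⁻¹ * (b - a) ^ 2 / 2 := by
      have : 0 ≤ δ * (t - δ⁻¹ * (b - a)) ^ 2 := by positivity
      have e2 : δ * (t - δ⁻¹ * (b - a)) ^ 2
          = δ * t ^ 2 - 2 * (δ * δ⁻¹) * t * (b - a) + (δ * δ⁻¹) * δ⁻¹ * (b - a) ^ 2 := by ring
      rw [e2, hd] at this
      linarith
    have h4 : t ^ 2 ≤ 2 * (ρ * a ^ 2 + (1 - ρ) * b ^ 2) := by
      have s1 : ρ ^ 2 * (1 - ρ) ^ 2 ≤ ρ := by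
        have : (1 - ρ) ^ 2 ≤ 1 := pow_le_one₀ hq.le (by linarith)
        calc ρ ^ 2 * (1 - ρ) ^ 2 ≤ ρ ^ 2 * 1 := by gcongr
          _ ≤ ρ := by nlinarith
      have s2 : ρ ^ 2 * (1 - ρ) ^ 2 ≤ 1 - ρ := by
        have : ρ ^ 2 ≤ 1 := pow_le_one₀ h0.le (by linarith)
        calc ρ ^ 2 * (1 - ρ) ^ 2 ≤ 1 * (1 - ρ) ^ 2 := by gcongr
          _ ≤ 1 - ρ := by nlinarith
      calc t ^ 2 = e ^ 2 * (ρ ^ 2 * (1 - ρ) ^ 2 * (a + b) ^ 2) := by rw [ht]; ring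
        _ ≤ 1 * (ρ ^ 2 * (1 - ρ) ^ 2 * (a + b) ^ 2) := by gcongr
        _ ≤ 1 * (ρ ^ 2 * (1 - ρ) ^ 2 * (2 * a ^ 2 + 2 * b ^ 2)) := by
            gcongr; nlinarith [sq_nonneg (a - b)]
        _ = 2 * (ρ ^ 2 * (1 - ρ) ^ 2 * a ^ 2 + ρ ^ 2 * (1 - ρ) ^ 2 * b ^ 2) := by ring
        _ ≤ 2 * (ρ * a ^ 2 + (1 - ρ) * b ^ 2) := by gcongr
    have h5 := mul_le_mul_of_nonneg_left h4 hδ.le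
    have h6 : 0 ≤ δ⁻¹ * (b - a) ^ 2 := by positivity
    have h7 : e * (ρ * (1 - ρ) * (b ^ 2 - a ^ 2)) = t * (b - a) := by rw [ht]; ring
    rw [h7]
    linarith
  rw [abs_le]
  constructor
  · have := key (-1) (by norm_num); linarith
  · have := key 1 (by norm_num); linarith

/-- Local equilibrium at a facilitated site: where `F` carries weight, the law of the site `i`
under the density `g ^ 2` is Bernoulli up to an error controlled by the Dirichlet energy. -/
lemma local_equilibrium (h0 : 0 < ρ) (h1 : ρ < 1) {δ : ℝ} (hδ : 0 < δ) (i : Fin N)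
    {F : Config N → ℝ} (hF : ∀ η, 0 ≤ F η) (hFi : Indep i F) (g : Config N → ℝ) :
    |𝐄 ρ (fun η => F η * ((if η i = true then 0 else 1) * g η ^ 2))
        - (1 - ρ) * 𝐄 ρ (fun η => F η * g η ^ 2)|
      ≤ δ * 𝐄 ρ (fun η => F η * g η ^ 2)
        + δ⁻¹ * 𝐄 ρ (fun η => F η * (g (flipAt η i) - g η) ^ 2) := by
  set ψ : Config N → ℝ := fun η => ((if η i = true then 0 else 1) - (1 - ρ)) * g η ^ 2 with hψ
  set χ : Config N → ℝ := fun η => δ * g η ^ 2 + δ⁻¹ * (g (flipAt η i) - g η) ^ 2 with hχ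
  have eL : 𝐄 ρ (fun η => F η * ((if η i = true then 0 else 1) * g η ^ 2))
        - (1 - ρ) * 𝐄 ρ (fun η => F η * g η ^ 2)
      = 𝐄 ρ (fun η => F η * resamp ρ i ψ η) := by
    rw [← resamp_of_indep hFi, expect_resamp, ← expect_smul, ← expect_sub]
    congr 1; funext η; simp only [hψ]; ring
  have eR : δ * 𝐄 ρ (fun η => F η * g η ^ 2)
        + δ⁻¹ * 𝐄 ρ (fun η => F η * (g (flipAt η i) - g η) ^ 2)
      = 𝐄 ρ (fun η => F η * resamp ρ i χ η) := by
    rw [← resamp_of_indep hFi, expect_resamp, ← expect_smul, ← expect_smul, ← expect_add]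
    congr 1; funext η; simp only [hχ]; ring
  have hp : ∀ η, |resamp ρ i ψ η| ≤ resamp ρ i χ η := by
    intro η
    have hb := two_point_bound h0 h1 hδ (g η) (g (flipAt η i))
    have hb' := two_point_bound h0 h1 hδ (g (flipAt η i)) (g η)
    cases hi : η i
    · have e1 : resamp ρ i ψ η = ρ * (1 - ρ) * (g η ^ 2 - g (flipAt η i) ^ 2) := by
        simp [resamp, hψ, flip_same, hi, siteW]; ring
      have e2 : resamp ρ i χ η = δ * (ρ * g (flipAt η i) ^ 2 + (1 - ρ) * g η ^ 2)
          + δ⁻¹ * (g η - g (flipAt η i)) ^ 2 := by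
        simp [resamp, hχ, hi, siteW, flipAt_flipAt]; ring
      rw [e1, e2]; exact hb'
    · have e1 : resamp ρ i ψ η = ρ * (1 - ρ) * (g (flipAt η i) ^ 2 - g η ^ 2) := by
        simp [resamp, hψ, flip_same, hi, siteW]; ring
      have e2 : resamp ρ i χ η = δ * (ρ * g η ^ 2 + (1 - ρ) * g (flipAt η i) ^ 2)
          + δ⁻¹ * (g (flipAt η i) - g η) ^ 2 := by
        simp [resamp, hχ, hi, siteW, flipAt_flipAt]; ring
      rw [e1, e2]; exact hb
  rw [eL, eR, abs_le]
  constructor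
  · have := expect_mono h0 h1 (u := fun η => (-1) * (F η * resamp ρ i χ η))
      (v := fun η => F η * resamp ρ i ψ η) (fun η => by
        have := mul_le_mul_of_nonneg_left (abs_le.1 (hp η)).1 (hF η); linarith)
    rw [expect_smul] at this; linarith
  · exact expect_mono h0 h1 fun η =>
      mul_le_mul_of_nonneg_left (abs_le.1 (hp η)).2 (hF η)

lemma local_equilibrium_rate (h0 : 0 < ρ) (h1 : ρ < 1) {δ : ℝ} (hδ : 0 < δ) (i : Fin N)
    {F : Config N → ℝ} (hF : ∀ η, 0 ≤ F η) (hFi : Indep i F) (g : Config N → ℝ) :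
    |𝐄 ρ (fun η => F η * (if η i = true then 1 - ρ else ρ) * g η ^ 2)
        - 2 * ρ * (1 - ρ) * 𝐄 ρ (fun η => F η * g η ^ 2)|
      ≤ δ * 𝐄 ρ (fun η => F η * g η ^ 2)
        + δ⁻¹ * 𝐄 ρ (fun η => F η * (g (flipAt η i) - g η) ^ 2) := by
  have h := local_equilibrium h0 h1 hδ i hF hFi g
  have e : 𝐄 ρ (fun η => F η * (if η i = true then 1 - ρ else ρ) * g η ^ 2)
      = (1 - ρ) * 𝐄 ρ (fun η => F η * g η ^ 2)
        + (2 * ρ - 1) * 𝐄 ρ (fun η => F η * ((if η i = true then 0 else 1) * g η ^ 2)) := by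
    rw [← expect_smul, ← expect_smul, ← expect_add]
    congr 1; funext η; split_ifs <;> ring
  set X := 𝐄 ρ (fun η => F η * ((if η i = true then 0 else 1) * g η ^ 2))
  set Y := 𝐄 ρ (fun η => F η * g η ^ 2)
  rw [e, show (1 - ρ) * Y + (2 * ρ - 1) * X - 2 * ρ * (1 - ρ) * Y
    = (2 * ρ - 1) * (X - (1 - ρ) * Y) by ring, abs_mul]
  refine le_trans ?_ h
  exact mul_le_of_le_one_left (abs_nonneg _) (abs_le.2 ⟨by linarith, by linarith⟩)

lemma expect_weight_le (h0 : 0 < ρ) (h1 : ρ < 1) {F g : Config N → ℝ} (hF : ∀ η, F η ≤ 1)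
    (hg : 𝐄 ρ (fun η => g η ^ 2) = 1) : 𝐄 ρ (fun η => F η * g η ^ 2) ≤ 1 := by
  rw [← hg]
  exact expect_mono h0 h1 fun η => mul_le_of_le_one_left (sq_nonneg _) (hF η)

lemma expect_weight_nonneg (h0 : 0 < ρ) (h1 : ρ < 1) {F : Config N → ℝ} (g : Config N → ℝ)
    (hF : ∀ η, 0 ≤ F η) : 0 ≤ 𝐄 ρ (fun η => F η * g η ^ 2) :=
  expect_nonneg h0 h1 fun η => mul_nonneg (hF η) (sq_nonneg _)

/-! ### Sites counted from the right and averages over the right end -/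

variable [NeZero N]

/-- The `n`-th site counted from the right end, starting at `0`; for `n ≥ N` the value is
irrelevant. -/
def rs (N : ℕ) [NeZero N] (n : ℕ) : Fin N :=
  ⟨N - 1 - n, by have := NeZero.pos N; omega⟩

lemma rs_ne {a b : ℕ} (ha : a < N) (hb : b < N) (h : a ≠ b) : rs N a ≠ rs N b := by
  simp only [rs, ne_eq, Fin.mk.injEq]; omega

lemma sum_rs (u : Fin N → ℝ) : ∑ i, u i = ∑ n ∈ range N, u (rs N n) := by
  rw [← Fin.sum_univ_eq_sum_range (fun n => u (rs N n)), ← Equiv.sum_comp Fin.revPerm]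
  refine sum_congr rfl fun i _ => ?_
  congr 1
  ext
  simp [rs, Fin.val_rev]; omega

/-- The number of consecutive particles immediately to the right of the site `rs N n`
(the boundary beyond the right end being empty). -/
def run (η : Config N) : ℕ → ℕ
  | 0 => 0
  | n + 1 => if η (rs N n) = true then run η n + 1 else 0

/-- The average over the `n` rightmost sites. -/
noncomputable def avgR (ρ : ℝ) : ℕ → (Config N → ℝ) → Config N → ℝ
  | 0, u => u
  | n + 1, u => resamp ρ (rs N n) (avgR ρ n u)

lemma run_le (η : Config N) (n : ℕ) : run η n ≤ n := by
  induction n with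
  | zero => simp [run]
  | succ n ih => simp only [run]; split_ifs <;> omega

lemma run_flip (η : Config N) {n m : ℕ} (h : n ≤ m) (hm : m < N) :
    run (flipAt η (rs N m)) n = run η n := by
  induction n with
  | zero => rfl
  | succ n ih =>
    simp only [run, ih (by omega), flip_ne η (rs_ne (show n < N by omega) hm (by omega))]

lemma indep_run (φ : ℕ → ℝ) {n m : ℕ} (h : n ≤ m) (hm : m < N) :
    Indep (rs N m) (fun η : Config N => φ (run η n)) := fun η => by
  simp only [run_flip η h hm]

/-- Whether the run to the right of the site `n` reaches length `l` depends only on the `l` sites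
`n - 1, …, n - l`, counted from the right end. -/
lemma le_run_flip (η : Config N) {n l m : ℕ} (h : m + l < n) (hn : n ≤ N) :
    (l ≤ run (flipAt η (rs N m)) n ↔ l ≤ run η n) := by
  induction l generalizing n with
  | zero => simp
  | succ l ih =>
    obtain ⟨n, rfl⟩ : ∃ k, n = k + 1 := ⟨n - 1, by omega⟩
    simp only [run, flip_ne η (rs_ne (show n < N by omega) (show m < N by omega) (by omega))]
    have := ih (n := n) (by omega) (by omega)
    split_ifs <;> omega

lemma avgR_of_indep {n : ℕ} {w : Config N → ℝ} (hw : ∀ k < n, Indep (rs N k) w)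
    (u : Config N → ℝ) : avgR ρ n (fun η => w η * u η) = fun η => w η * avgR ρ n u η := by
  induction n with
  | zero => rfl
  | succ n ih =>
    rw [avgR, ih fun k hk => hw k (by omega), resamp_of_indep (hw n (by omega))]
    rfl

lemma indep_avgR_of {n : ℕ} {i : Fin N} {u : Config N → ℝ} (hu : Indep i u) :
    Indep i (avgR ρ n u) := by
  induction n with
  | zero => exact hu
  | succ n ih => exact ih.resamp

lemma indep_avgR {n k : ℕ} (h : k < n) (u : Config N → ℝ) :
    Indep (rs N k) (avgR ρ n u) := by
  induction n with
  | zero => omega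
  | succ n ih =>
    by_cases hk : k = n
    · subst hk; exact indep_resamp _ _
    · exact (ih (by omega)).resamp

lemma avgR_self {n : ℕ} {w : Config N → ℝ} (hw : ∀ k < n, Indep (rs N k) w) :
    avgR ρ n w = w := by
  induction n with
  | zero => rfl
  | succ n ih => rw [avgR, ih fun k hk => hw k (by omega), resamp_self (hw n (by omega))]

lemma avgR_resamp (n : ℕ) (i : Fin N) (u : Config N → ℝ) :
    avgR ρ n (resamp ρ i u) = resamp ρ i (avgR ρ n u) := by
  induction n with
  | zero => rfl
  | succ n ih => rw [avgR, ih, resamp_comm]; rfl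

lemma avgR_avgR {m n : ℕ} (h : m ≤ n) (u : Config N → ℝ) :
    avgR ρ n (avgR ρ m u) = avgR ρ n u := by
  induction m with
  | zero => rfl
  | succ m ih =>
    rw [avgR, avgR_resamp, ih (by omega), resamp_self (indep_avgR (by omega) u)]

lemma avgR_add (n : ℕ) (u v : Config N → ℝ) :
    avgR ρ n (fun η => u η + v η) = fun η => avgR ρ n u η + avgR ρ n v η := by
  induction n with
  | zero => rfl
  | succ n ih => rw [avgR, ih, resamp_add]; rfl

lemma avgR_sub (n : ℕ) (u v : Config N → ℝ) :
    avgR ρ n (fun η => u η - v η) = fun η => avgR ρ n u η - avgR ρ n v η := by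
  induction n with
  | zero => rfl
  | succ n ih => rw [avgR, ih, resamp_sub]; rfl

lemma avgR_mono (h0 : 0 < ρ) (h1 : ρ < 1) (n : ℕ) {u v : Config N → ℝ}
    (h : ∀ η, u η ≤ v η) (η : Config N) : avgR ρ n u η ≤ avgR ρ n v η := by
  induction n generalizing η with
  | zero => exact h η
  | succ n ih => exact resamp_mono h0 h1 _ ih η

lemma avgR_cs (h0 : 0 < ρ) (h1 : ρ < 1) (n : ℕ) {a b c : Config N → ℝ}
    (hb : ∀ η, 0 ≤ b η) (hc : ∀ η, 0 ≤ c η) (h : ∀ η, a η ^ 2 ≤ b η * c η) (η : Config N) :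
    avgR ρ n a η ^ 2 ≤ avgR ρ n b η * avgR ρ n c η := by
  induction n generalizing η with
  | zero => exact h η
  | succ n ih =>
    have hz : ∀ η : Config N, avgR ρ n (fun _ => 0) η = 0 := fun η => by
      rw [avgR_self (w := fun _ => (0:ℝ)) (fun k _ η => rfl)]
    refine resamp_cs h0 h1 _ (fun η => ?_) (fun η => ?_) ih η
    · rw [← hz η]; exact avgR_mono h0 h1 n hb η
    · rw [← hz η]; exact avgR_mono h0 h1 n hc η

lemma expect_avgR (n : ℕ) (u : Config N → ℝ) : 𝐄 ρ (avgR ρ n u) = 𝐄 ρ u := by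
  induction n with
  | zero => rfl
  | succ n ih => rw [avgR, expect_resamp, ih]

lemma expect_avgR_sq_le (h0 : 0 < ρ) (h1 : ρ < 1) (n : ℕ) (u : Config N → ℝ) :
    𝐄 ρ (fun η => avgR ρ n u η ^ 2) ≤ 𝐄 ρ (fun η => u η ^ 2) := by
  rw [← expect_avgR n (fun η => u η ^ 2)]
  refine expect_mono h0 h1 fun η => ?_
  have h := avgR_cs h0 h1 n (a := u) (b := fun _ => 1) (c := fun η => u η ^ 2)
    (by simp) (fun η => sq_nonneg _) (by simp) η
  rw [avgR_self (w := fun _ => (1:ℝ)) (fun k _ η => rfl), one_mul] at h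
  exact h

/-- Averaging over the whole box gives the expectation. -/
lemma avgR_full (u : Config N → ℝ) (η : Config N) : avgR ρ N u η = 𝐄 ρ u := by
  have hi : ∀ i, Indep i (avgR ρ N u) := fun i => by
    have : i = rs N (N - 1 - i.1) := by ext; simp [rs]; omega
    rw [this]; exact indep_avgR (by omega) u
  have hc : avgR ρ N u = fun _ => avgR ρ N u η := by
    funext η'; exact const_of_indep hi η' η
  rw [← expect_avgR N u, hc, expect_const]

/-- A run of at least `l` particles has probability at most `ρ ^ l`. -/
lemma avgR_run (h0 : 0 < ρ) (n l : ℕ) (hn : n ≤ N) (η : Config N) :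
    avgR ρ n (fun η => if l ≤ run η n then (1:ℝ) else 0) η ≤ ρ ^ l := by
  induction n generalizing l η with
  | zero =>
    rcases l with _ | l
    · simp [avgR]
    · simp [avgR, run]; positivity
  | succ n ih =>
    rcases l with _ | l
    · simp only [zero_le, if_true, pow_zero]
      rw [avgR_self (w := fun _ => (1:ℝ)) (fun k _ η => rfl)]
    · have e : (fun η : Config N => if l + 1 ≤ run η (n+1) then (1:ℝ) else 0)
          = fun η => (fun b : Bool => if b = true then (1:ℝ) else 0) (η (rs N n))
            * (if l ≤ run η n then (1:ℝ) else 0) := by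
        funext η
        simp only [run]
        by_cases h : η (rs N n) = true <;> simp [h]
      rw [e, avgR, avgR_of_indep (w := fun η => (fun b : Bool => if b = true then (1:ℝ) else 0)
        (η (rs N n))) (fun k hk => indep_comp (rs_ne (by omega) (by omega) (by omega))
          (fun b : Bool => if b = true then (1:ℝ) else 0))]
      simp only [resamp, flip_same]
      have a1 := ih l (by omega) η
      have a2 := ih l (by omega) (flipAt η (rs N n))
      rw [pow_succ]
      cases h : η (rs N n) <;> simp [siteW] <;> nlinarith

/-! ### The spectral gap for long-range facilitation -/

/-- Dirichlet energy of the site `rs N n` under the relaxed constraint that there is an empty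
site (or the boundary) at distance at most `k + 1` to its right. For `k = 0` this is the East
constraint. -/
noncomputable def runE (ρ : ℝ) (g : Config N → ℝ) (k n : ℕ) : ℝ :=
  𝐄 ρ (fun η => if run η n ≤ k then (g (flipAt η (rs N n)) - g η) ^ 2 else 0)

lemma runE_nonneg (h0 : 0 < ρ) (h1 : ρ < 1) (g : Config N → ℝ) (k n : ℕ) :
    0 ≤ runE ρ g k n :=
  expect_nonneg h0 h1 fun η => by split_ifs <;> positivity

/-- Telescoping with lag `L` for an antitone sequence. -/
lemma sum_lag_le {b : ℕ → ℝ} (hb : Antitone b) (L M : ℕ) :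
    ∑ n ∈ range M, (b (n - L) - b (n + 1)) ≤ (L + 1) * (b 0 - b M) := by
  have key : ∀ M, ∑ n ∈ range M, (b (n - L) - b (n + 1))
      ≤ ∑ j ∈ range (L + 1), (b 0 - b (M - j)) := by
    intro M
    induction M with
    | zero => simp
    | succ M ih =>
      rw [sum_range_succ, sum_range_succ']
      rw [sum_range_succ] at ih
      simp only [Nat.add_sub_add_right, Nat.sub_zero]
      linarith
  refine (key M).trans ?_
  calc ∑ j ∈ range (L + 1), (b 0 - b (M - j)) ≤ ∑ j ∈ range (L + 1), (b 0 - b M) :=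
        sum_le_sum fun j _ => by have := hb (Nat.sub_le M j); linarith
    _ = (L + 1) * (b 0 - b M) := by simp; ring

/-- The bad part of a martingale increment: the weight `w`, of conditional mean square at most
`ρ ^ L`, depends on the `L` sites to the right of `n` only, so that the sites further right may
be averaged out first. -/
lemma bad_increment_le (h0 : 0 < ρ) (h1 : ρ < 1) (f : Config N → ℝ) (L n : ℕ) (hn : n < N) :
    𝐄 ρ (fun η => avgR ρ n (fun η => (if L ≤ run η n then (1:ℝ) else 0)
        * (f η - resamp ρ (rs N n) f η)) η ^ 2)
      ≤ ρ ^ L * (𝐄 ρ (fun η => avgR ρ (n - L) f η ^ 2)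
          - 𝐄 ρ (fun η => avgR ρ (n + 1) f η ^ 2)) := by
  set w : Config N → ℝ := fun η => if L ≤ run η n then (1:ℝ) else 0 with hw
  set u : Config N → ℝ := avgR ρ (n - L) f with hu
  have hwi : ∀ k < n - L, Indep (rs N k) w := fun k hk η => by
    simp only [hw, le_run_flip η (l := L) (n := n) (m := k) (by omega) hn.le]
  have e : avgR ρ n (fun η => w η * (f η - resamp ρ (rs N n) f η))
      = avgR ρ n (fun η => w η * (u η - resamp ρ (rs N n) u η)) := by
    rw [← avgR_avgR (Nat.sub_le n L), avgR_of_indep hwi, avgR_sub, avgR_resamp]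
  rw [e]
  have hp : ∀ η, avgR ρ n (fun η => w η * (u η - resamp ρ (rs N n) u η)) η ^ 2
      ≤ ρ ^ L * avgR ρ n (fun η => (u η - resamp ρ (rs N n) u η) ^ 2) η := by
    intro η
    refine (avgR_cs h0 h1 n (b := w) (c := fun η => (u η - resamp ρ (rs N n) u η) ^ 2)
      (fun η => ?_) (fun η => sq_nonneg _) (fun η => ?_) η).trans ?_
    · simp only [hw]; split_ifs <;> norm_num
    · simp only [hw]; split_ifs <;> simp
    · refine mul_le_mul_of_nonneg_right (avgR_run h0 n L hn.le η) ?_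
      have h := avgR_mono h0 h1 n (u := fun _ => 0)
        (v := fun η => (u η - resamp ρ (rs N n) u η) ^ 2) (fun η => sq_nonneg _) η
      rwa [avgR_self (w := fun _ => (0:ℝ)) (fun k _ η => rfl)] at h
  refine (expect_mono h0 h1 hp).trans ?_
  rw [expect_smul, expect_avgR, expect_sub_resamp_sq]
  refine mul_le_mul_of_nonneg_left ?_ (by positivity)
  have h2 := expect_avgR_sq_le h0 h1 n (resamp ρ (rs N n) u)
  rw [avgR_resamp, hu, avgR_avgR (Nat.sub_le n L)] at h2
  have h3 : avgR ρ (n + 1) f = resamp ρ (rs N n) (avgR ρ n f) := rfl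
  rw [h3]
  linarith

/-- Uniform Poincaré inequality when facilitation reaches far enough. The hypothesis on `l` makes
the bad parts of the martingale increments contribute at most half of the variance. -/
lemma variance_le_long (h0 : 0 < ρ) (h1 : ρ < 1) (l : ℕ)
    (hl : 4 * ((l:ℝ) + 2) * ρ ^ (l + 1) ≤ 1) (f : Config N → ℝ) :
    𝐄 ρ (fun η => f η ^ 2) - 𝐄 ρ f ^ 2 ≤ 4 * ∑ n ∈ range N, runE ρ f l n := by
  set b : ℕ → ℝ := fun n => 𝐄 ρ (fun η => avgR ρ n f η ^ 2) with hb
  have hinc : ∀ n, b n - b (n + 1)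
      = 𝐄 ρ (fun η => (avgR ρ n f η - resamp ρ (rs N n) (avgR ρ n f) η) ^ 2) :=
    fun n => (expect_sub_resamp_sq _ _).symm
  have hanti : Antitone b := antitone_nat_of_succ_le fun n => by
    have := hinc n
    have h := expect_nonneg h0 h1
      (u := fun η => (avgR ρ n f η - resamp ρ (rs N n) (avgR ρ n f) η) ^ 2)
      (fun η => sq_nonneg _)
    linarith
  have h1N : b N = 𝐄 ρ f ^ 2 := by
    simp only [hb, avgR_full, expect_const]
  have hstep : ∀ n ∈ range N, b n - b (n + 1)
      ≤ 2 * runE ρ f l n + 2 * (ρ ^ (l + 1) * (b (n - (l + 1)) - b (n + 1))) := by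
    intro n hn
    have hn := mem_range.1 hn
    have hbad := bad_increment_le h0 h1 f (l + 1) n hn
    set w : Config N → ℝ := fun η => if l + 1 ≤ run η n then (1:ℝ) else 0 with hw
    set c : Config N → ℝ := fun η => if run η n ≤ l then (1:ℝ) else 0 with hc
    set v : Config N → ℝ := fun η => f η - resamp ρ (rs N n) f η with hv
    have hsplit : ∀ η, avgR ρ n f η - resamp ρ (rs N n) (avgR ρ n f) η
        = avgR ρ n (fun η => c η * v η) η + avgR ρ n (fun η => w η * v η) η := by
      intro η
      have := congrFun (avgR_add (ρ := ρ) n (fun η => c η * v η) (fun η => w η * v η)) η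
      rw [← this, ← avgR_resamp, ← congrFun (avgR_sub (ρ := ρ) n f _) η]
      congr 1
      funext η
      simp only [hc, hw, hv]
      by_cases h : run η n ≤ l
      · simp [h, show ¬ (l + 1 ≤ run η n) by omega]
      · simp [h, show (l + 1 ≤ run η n) by omega]
    have hgood : 𝐄 ρ (fun η => avgR ρ n (fun η => c η * v η) η ^ 2) ≤ runE ρ f l n := by
      refine (expect_avgR_sq_le h0 h1 n _).trans (expect_mono h0 h1 fun η => ?_)
      simp only [hc, hv]
      split_ifs
      · simpa using sub_resamp_sq_le h0 h1 (rs N n) f η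
      · simp
    rw [hinc]
    calc 𝐄 ρ (fun η => (avgR ρ n f η - resamp ρ (rs N n) (avgR ρ n f) η) ^ 2)
        ≤ 𝐄 ρ (fun η => 2 * (avgR ρ n (fun η => c η * v η) η) ^ 2
            + 2 * (avgR ρ n (fun η => w η * v η) η) ^ 2) := by
          refine expect_mono h0 h1 fun η => ?_
          rw [hsplit]
          nlinarith [sq_nonneg (avgR ρ n (fun η => c η * v η) η
            - avgR ρ n (fun η => w η * v η) η)]
      _ ≤ _ := by
          rw [expect_add, expect_smul, expect_smul]
          gcongr
  have htel : ∑ n ∈ range N, (b n - b (n + 1)) = b 0 - b N := sum_range_sub' b N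
  have hlag := sum_lag_le hanti (l + 1) N
  have hsum := sum_le_sum hstep
  rw [htel, sum_add_distrib, ← mul_sum, ← mul_sum, ← mul_sum] at hsum
  have hb0 : b 0 = 𝐄 ρ (fun η => f η ^ 2) := rfl
  have hpos : 0 ≤ b 0 - b N := sub_nonneg.2 (hanti (Nat.zero_le N))
  have h2 : ρ ^ (l + 1) * ∑ n ∈ range N, (b (n - (l + 1)) - b (n + 1))
      ≤ ρ ^ (l + 1) * (((l + 1 : ℕ) + 1) * (b 0 - b N)) :=
    mul_le_mul_of_nonneg_left hlag (by positivity)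
  push_cast at h2
  have h3 : 4 * (l + 2) * ρ ^ (l + 1) * (b 0 - b N) ≤ 1 * (b 0 - b N) :=
    mul_le_mul_of_nonneg_right hl hpos
  rw [← hb0, ← h1N]
  nlinarith

/-! ### From long-range to nearest-neighbour facilitation -/

lemma runE_zero_zero (g : Config N → ℝ) (k : ℕ) : runE ρ g k 0 = runE ρ g 0 0 := by
  simp [runE, run]

/-- To flip the site `n + 1` one may first empty the site `n`, flip `n + 1`, and refill `n`. -/
lemma runE_succ_le (h0 : 0 < ρ) (h1 : ρ < 1) (g : Config N → ℝ) (k n : ℕ) (hn : n + 1 < N) :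
    runE ρ g (k + 1) (n + 1) ≤ (1 + 3 * (ρ * (1 - ρ))⁻¹) * runE ρ g 0 (n + 1)
      + 3 * ((ρ * (1 - ρ))⁻¹ + 1) * runE ρ g k n := by
  set F : Config N → ℝ :=
    fun η => if run η (n + 1) ≤ 0 then (g (flipAt η (rs N (n + 1))) - g η) ^ 2 else 0 with hF
  set G : Config N → ℝ :=
    fun η => if run η n ≤ k then (g (flipAt η (rs N n)) - g η) ^ 2 else 0 with hG
  have hF0 : ∀ η, 0 ≤ F η := fun η => by simp only [hF]; split_ifs <;> positivity
  have hG0 : ∀ η, 0 ≤ G η := fun η => by simp only [hG]; split_ifs <;> positivity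
  have hp : ∀ η, (if run η (n + 1) ≤ k + 1
      then (g (flipAt η (rs N (n + 1))) - g η) ^ 2 else 0)
      ≤ F η + 3 * (G (flipAt η (rs N (n + 1))) + F (flipAt η (rs N n)) + G η) := by
    intro η
    by_cases hη : η (rs N n) = true
    · have r1 : run η (n + 1) = run η n + 1 := by simp [run, hη]
      have r2 : run (flipAt η (rs N n)) (n + 1) = 0 := by simp [run, flip_same, hη]
      have r3 : run (flipAt η (rs N (n + 1))) n = run η n := run_flip η (by omega) hn
      have hFη := hF0 η
      by_cases hk : run η n ≤ k
      · have e1 : F (flipAt η (rs N n)) = (g (flipAt (flipAt η (rs N n)) (rs N (n + 1)))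
            - g (flipAt η (rs N n))) ^ 2 := by simp only [hF, r2]; simp
        have e2 : G (flipAt η (rs N (n + 1))) = (g (flipAt (flipAt η (rs N n)) (rs N (n + 1)))
            - g (flipAt η (rs N (n + 1)))) ^ 2 := by
          simp only [hG, r3, hk, if_true, flip_comm η (rs N n)]
        have e3 : G η = (g (flipAt η (rs N n)) - g η) ^ 2 := by simp only [hG, hk, if_true]
        rw [e1, e2, e3, r1, if_pos (by omega)]
        set a := g (flipAt (flipAt η (rs N n)) (rs N (n + 1)))
        set b := g (flipAt η (rs N (n + 1)))
        set c := g (flipAt η (rs N n))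
        set d := g η
        nlinarith [sq_nonneg ((b - a) - (a - c)), sq_nonneg ((a - c) - (c - d)),
          sq_nonneg ((b - a) - (c - d))]
      · rw [r1, if_neg (by omega)]
        have := hG0 (flipAt η (rs N (n + 1)))
        have := hF0 (flipAt η (rs N n))
        have := hG0 η
        positivity
    · have r1 : run η (n + 1) = 0 := by simp [run, hη]
      have e1 : F η = (g (flipAt η (rs N (n + 1))) - g η) ^ 2 := by simp only [hF, r1]; simp
      rw [r1, if_pos (by omega), e1]
      have := hG0 (flipAt η (rs N (n + 1)))
      have := hF0 (flipAt η (rs N n))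
      have := hG0 η
      linarith
  have h2 := expect_mono h0 h1 hp
  rw [expect_add, expect_smul, expect_add, expect_add] at h2
  have h3 := expect_flip_le h0 h1 (rs N (n + 1)) hG0
  have h4 := expect_flip_le h0 h1 (rs N n) hF0
  change runE ρ g (k + 1) (n + 1) ≤ (1 + 3 * (ρ * (1 - ρ))⁻¹) * 𝐄 ρ F
    + 3 * ((ρ * (1 - ρ))⁻¹ + 1) * 𝐄 ρ G
  change runE ρ g (k + 1) (n + 1) ≤ _ at h2
  linarith

/-- The constant comparing the constraint relaxed to distance `k + 1` with the East constraint. -/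
noncomputable def pathC (ρ : ℝ) : ℕ → ℝ
  | 0 => 1
  | k + 1 => (1 + 3 * (ρ * (1 - ρ))⁻¹) + 3 * ((ρ * (1 - ρ))⁻¹ + 1) * pathC ρ k

lemma pathC_nonneg (h0 : 0 < ρ) (h1 : ρ < 1) (k : ℕ) : 0 ≤ pathC ρ k := by
  have hM : 0 < (ρ * (1 - ρ))⁻¹ := inv_pos.2 (mul_pos h0 (by linarith))
  induction k with
  | zero => simp [pathC]
  | succ k ih => rw [pathC]; positivity

lemma sum_runE_le (h0 : 0 < ρ) (h1 : ρ < 1) (g : Config N → ℝ) (k : ℕ) :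
    ∑ n ∈ range N, runE ρ g k n ≤ pathC ρ k * ∑ n ∈ range N, runE ρ g 0 n := by
  have hM : 0 < (ρ * (1 - ρ))⁻¹ := inv_pos.2 (mul_pos h0 (by linarith))
  induction k with
  | zero => simp [pathC]
  | succ k ih =>
    obtain ⟨K, hK⟩ : ∃ K, N = K + 1 := ⟨N - 1, by have := NeZero.pos N; omega⟩
    have hstep : ∑ n ∈ range K, runE ρ g (k + 1) (n + 1)
        ≤ ∑ n ∈ range K, ((1 + 3 * (ρ * (1 - ρ))⁻¹) * runE ρ g 0 (n + 1)
          + 3 * ((ρ * (1 - ρ))⁻¹ + 1) * runE ρ g k n) :=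
      sum_le_sum fun n hn => runE_succ_le h0 h1 g k n (by have := mem_range.1 hn; omega)
    rw [sum_add_distrib, ← mul_sum, ← mul_sum] at hstep
    have hsub : ∑ n ∈ range K, runE ρ g k n ≤ ∑ n ∈ range N, runE ρ g k n :=
      sum_le_sum_of_subset_of_nonneg (range_subset_range.2 (by omega))
        fun n _ _ => runE_nonneg h0 h1 g k n
    have hz := runE_nonneg h0 h1 g 0 0
    have e : ∀ j, ∑ n ∈ range N, runE ρ g j n
        = ∑ n ∈ range K, runE ρ g j (n + 1) + runE ρ g 0 0 := fun j => by
      rw [show range N = range (K + 1) by rw [hK], sum_range_succ', runE_zero_zero]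
    have h3 : 3 * ((ρ * (1 - ρ))⁻¹ + 1) * ∑ n ∈ range K, runE ρ g k n
        ≤ 3 * ((ρ * (1 - ρ))⁻¹ + 1) * (pathC ρ k * ∑ n ∈ range N, runE ρ g 0 n) :=
      mul_le_mul_of_nonneg_left (hsub.trans ih) (by positivity)
    have h4 : 0 ≤ 3 * (ρ * (1 - ρ))⁻¹ * runE ρ g 0 0 := by positivity
    rw [pathC, e (k + 1)]
    have e0 := e 0
    rw [add_mul, mul_assoc _ (pathC ρ k)]
    rw [e0] at h3 ⊢
    linarith

/-- The uniform Poincaré inequality for the East constraint. -/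
lemma variance_le (h0 : 0 < ρ) (h1 : ρ < 1) : ∃ K : ℝ, 0 < K ∧
    ∀ (N : ℕ) [NeZero N] (f : Config N → ℝ),
      𝐄 ρ (fun η => f η ^ 2) - 𝐄 ρ f ^ 2 ≤ K * ∑ n ∈ range N, runE ρ f 0 n := by
  have ht : Tendsto (fun l : ℕ => 4 * ((l:ℝ) + 2) * ρ ^ (l + 1)) atTop (nhds 0) := by
    have t1 := tendsto_self_mul_const_pow_of_lt_one h0.le h1
    have t2 := tendsto_pow_atTop_nhds_zero_of_lt_one h0.le h1
    have := ((t1.const_mul (4 * ρ)).add (t2.const_mul (8 * ρ)))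
    simp only [mul_zero, add_zero] at this
    refine this.congr fun l => ?_
    ring
  obtain ⟨l, hl⟩ := (ht.eventually (ge_mem_nhds (show (0:ℝ) < 1 by norm_num))).exists
  refine ⟨4 * pathC ρ l + 1, by have := pathC_nonneg h0 h1 l; positivity, fun N _ f => ?_⟩
  have h2 := variance_le_long h0 h1 l hl f
  have h3 := sum_runE_le h0 h1 f l
  have h4 : 0 ≤ ∑ n ∈ range N, runE ρ f 0 n := sum_nonneg fun n _ => runE_nonneg h0 h1 f 0 n
  linarith

/-! ### Density of empty sites -/

/-- Indicator that the site `rs N n` is empty. -/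
noncomputable def emp (η : Config N) (n : ℕ) : ℝ := if η (rs N n) = true then 0 else 1

lemma emp_nonneg (η : Config N) (n : ℕ) : 0 ≤ emp η n := by
  unfold emp; split_ifs <;> norm_num

lemma emp_le (η : Config N) (n : ℕ) : emp η n ≤ 1 := by
  unfold emp; split_ifs <;> norm_num

lemma indep_emp {n m : ℕ} (hn : n < N) (hm : m < N) (h : n ≠ m) :
    Indep (rs N m) (fun η : Config N => emp η n) := fun η => by
  simp only [emp, flip_ne η (rs_ne hn hm h)]

/-- An empty site followed by `k` particles blocks these `k` sites, so there are at most `N / k`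
of them. -/
lemma count_long_runs (η : Config N) (k : ℕ) {m : ℕ} :
    ∑ j ∈ range m, k * (if η (rs N j) = true then 0 else if k ≤ run η j then 1 else 0)
      + min (run η m) k ≤ m := by
  induction m with
  | zero => simp [run]
  | succ m ih =>
    rw [sum_range_succ]
    simp only [run]
    split_ifs with h h' <;> simp only [mul_zero, mul_one, add_zero] <;> omega

/-- The expected number of empty sites under the density `g ^ 2`. -/
noncomputable def empMass (ρ : ℝ) (g : Config N → ℝ) : ℝ :=
  ∑ n ∈ range N, 𝐄 ρ (fun η => emp η n * g η ^ 2)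

/-- Upper bound on the density of empty sites with an arbitrarily small extensive error: empty
sites either have another empty site nearby on the right, and are then in local equilibrium, or
are followed by a long run of particles, and are then rare. -/
lemma empMass_le (h0 : 0 < ρ) (h1 : ρ < 1) {δ : ℝ} (hδ : 0 < δ) (k : ℕ) (g : Config N → ℝ)
    (hg : 𝐄 ρ (fun η => g η ^ 2) = 1) :
    empMass ρ g ≤ N * ((1 - ρ) + δ + ((k:ℝ) + 1)⁻¹) + δ⁻¹ * ∑ n ∈ range N, runE ρ g k n := by
  set c : ℕ → Config N → ℝ := fun n η => if run η n ≤ k then (1:ℝ) else 0 with hc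
  set w : ℕ → Config N → ℝ :=
    fun n η => if η (rs N n) = true then 0 else if k + 1 ≤ run η n then 1 else 0 with hw
  have hsplit : ∀ n, 𝐄 ρ (fun η => emp η n * g η ^ 2)
      = 𝐄 ρ (fun η => c n η * ((if η (rs N n) = true then 0 else 1) * g η ^ 2))
        + 𝐄 ρ (fun η => w n η * g η ^ 2) := by
    intro n
    rw [← expect_add]
    congr 1; funext η
    simp only [emp, hc, hw]
    by_cases h : run η n ≤ k
    · simp [h, show ¬ (k + 1 ≤ run η n) by omega]
    · simp [h, show (k + 1 ≤ run η n) by omega]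
  have hgood : ∀ n ∈ range N,
      𝐄 ρ (fun η => c n η * ((if η (rs N n) = true then 0 else 1) * g η ^ 2))
        ≤ (1 - ρ + δ) + δ⁻¹ * runE ρ g k n := by
    intro n hn
    have h := (abs_le.1 (local_equilibrium h0 h1 hδ (rs N n) (F := c n)
      (fun η => by simp only [hc]; split_ifs <;> norm_num)
      (indep_run (fun r => if r ≤ k then (1:ℝ) else 0) le_rfl (mem_range.1 hn)) g)).2
    have h2 := expect_weight_le h0 h1 (F := c n)
      (fun η => by simp only [hc]; split_ifs <;> norm_num) hg
    have e : 𝐄 ρ (fun η => c n η * (g (flipAt η (rs N n)) - g η) ^ 2) = runE ρ g k n := by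
      unfold runE; congr 1; funext η; simp only [hc, ite_mul, one_mul, zero_mul]
    rw [e] at h
    have h3 : (1 - ρ + δ) * 𝐄 ρ (fun η => c n η * g η ^ 2) ≤ (1 - ρ + δ) * 1 :=
      mul_le_mul_of_nonneg_left h2 (by linarith)
    linarith
  have hbad : ∑ n ∈ range N, 𝐄 ρ (fun η => w n η * g η ^ 2) ≤ N * ((k:ℝ) + 1)⁻¹ := by
    rw [← expect_sum]
    have hk : (0:ℝ) < (k:ℝ) + 1 := by positivity
    have hcount : ∀ η : Config N, ∑ n ∈ range N, w n η ≤ N * ((k:ℝ) + 1)⁻¹ := by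
      intro η
      have h := (Nat.le_add_right _ _).trans (count_long_runs η (k + 1) (m := N))
      rw [← mul_sum] at h
      have h' : ((k:ℝ) + 1) * ∑ n ∈ range N, w n η ≤ N := by
        have := (Nat.cast_le (α := ℝ)).2 h
        push_cast at this
        exact this
      rw [← div_eq_mul_inv, le_div_iff₀ hk]
      linarith
    calc 𝐄 ρ (fun η => ∑ n ∈ range N, w n η * g η ^ 2)
        ≤ 𝐄 ρ (fun η => (N * ((k:ℝ) + 1)⁻¹) * g η ^ 2) :=
          expect_mono h0 h1 fun η => by
            rw [← sum_mul]; exact mul_le_mul_of_nonneg_right (hcount η) (sq_nonneg _)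
      _ = N * ((k:ℝ) + 1)⁻¹ := by rw [expect_smul, hg, mul_one]
  have hs := sum_le_sum hgood
  rw [sum_add_distrib, ← mul_sum, sum_const, card_range, nsmul_eq_mul] at hs
  unfold empMass
  simp only [hsplit]
  rw [sum_add_distrib]
  linarith

lemma expect_emp (n : ℕ) : 𝐄 ρ (fun η : Config N => emp η n) = 1 - ρ := by
  rw [← expect_resamp (rs N n)]
  have : resamp ρ (rs N n) (fun η : Config N => emp η n) = fun _ => 1 - ρ := by
    funext η
    cases h : η (rs N n) <;> simp [resamp, emp, flip_same, h, siteW]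
  rw [this, expect_const]

/-- Lower bound on the density of empty sites in terms of the variance of `g`. The fluctuations
of the number of empty sites are themselves controlled by the Poincaré inequality. -/
lemma le_empMass (h0 : 0 < ρ) (h1 : ρ < 1) {K : ℝ} (hK : 0 < K)
    (hP : ∀ f : Config N → ℝ,
      𝐄 ρ (fun η => f η ^ 2) - 𝐄 ρ f ^ 2 ≤ K * ∑ n ∈ range N, runE ρ f 0 n)
    (g : Config N → ℝ) (hg : 𝐄 ρ (fun η => g η ^ 2) = 1) :
    N * (1 - ρ) - 2 * N * (K * ∑ n ∈ range N, runE ρ g 0 n) - K ≤ empMass ρ g := by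
  have hN : (0:ℝ) < N := Nat.cast_pos.2 (NeZero.pos N)
  set X : Config N → ℝ := fun η => ∑ n ∈ range N, (emp η n - (1 - ρ)) with hX
  have hEX : 𝐄 ρ X = 0 := by
    rw [hX, expect_sum]
    refine sum_eq_zero fun n _ => ?_
    rw [expect_sub, expect_emp, expect_const, sub_self]
  have hXabs : ∀ η, -N ≤ X η := by
    intro η
    have : ∑ n ∈ range N, (-1:ℝ) ≤ X η :=
      sum_le_sum fun n _ => by have := emp_nonneg η n; linarith
    simpa using this
  have hXflip : ∀ η, ∀ n < N, (X (flipAt η (rs N n)) - X η) ^ 2 ≤ 1 := by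
    intro η n hn
    rw [hX, ← sum_sub_distrib, sum_eq_single_of_mem n (mem_range.2 hn)]
    · have := emp_nonneg η n
      have := emp_le η n
      have := emp_nonneg (flipAt η (rs N n)) n
      have := emp_le (flipAt η (rs N n)) n
      rw [sq_le_one_iff_abs_le_one, abs_le]
      constructor <;> linarith
    · intro j hj hjn
      have := indep_emp (mem_range.1 hj) hn hjn η
      simp only at this
      rw [this, sub_self]
  have hXX : 𝐄 ρ (fun η => X η ^ 2) ≤ K * N := by
    have h := hP X
    rw [hEX] at h
    have h2 : ∑ n ∈ range N, runE ρ X 0 n ≤ ∑ n ∈ range N, (1:ℝ) := by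
      refine sum_le_sum fun n hn => ?_
      have := expect_mono h0 h1 (v := fun _ => (1:ℝ)) (u := fun η : Config N =>
        if run η n ≤ 0 then (X (flipAt η (rs N n)) - X η) ^ 2 else 0) fun η => by
          split_ifs
          · exact hXflip η n (mem_range.1 hn)
          · norm_num
      rwa [expect_const] at this
    have h3 := mul_le_mul_of_nonneg_left h2 hK.le
    simp only [sum_const, card_range, nsmul_eq_mul, mul_one] at h3
    nlinarith
  set m := 𝐄 ρ g with hm
  have hv := hP g
  rw [hg] at hv
  have hh : 𝐄 ρ (fun η => (g η - m) ^ 2) = 1 - m ^ 2 := by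
    have e : (fun η => (g η - m) ^ 2) = fun η => (g η ^ 2 + m ^ 2) - 2 * m * g η := by
      funext η; ring
    rw [e, expect_sub, expect_add, expect_smul, expect_const, hg, ← hm]; ring
  have hm1 : m ^ 2 ≤ 1 := by
    have := expect_nonneg h0 h1 (u := fun η => (g η - m) ^ 2) fun η => sq_nonneg _
    linarith
  -- Expand `g² = (g - m)² + 2 m (g - m) + m²`; the first term is handled by `X ≥ -N`, the cross
  -- term by a Young inequality with weight `N`, so that `X²` comes with the factor `1 / N`.
  have hp : ∀ η, m ^ 2 * X η - (2 * N * (g η - m) ^ 2 + (m ^ 2 / N) * X η ^ 2)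
      ≤ X η * g η ^ 2 := by
    intro η
    have a1 : 0 ≤ (N + X η) * (g η - m) ^ 2 :=
      mul_nonneg (by have := hXabs η; linarith) (sq_nonneg _)
    have a2 : 0 ≤ N * ((g η - m) + m * X η / N) ^ 2 := by positivity
    have e2 : N * ((g η - m) + m * X η / N) ^ 2
        = N * (g η - m) ^ 2 + 2 * m * X η * (g η - m) + (m ^ 2 / N) * X η ^ 2 := by
      field_simp
      ring
    rw [e2] at a2
    linarith [show X η * g η ^ 2 = X η * (g η - m) ^ 2 + 2 * m * X η * (g η - m)
      + m ^ 2 * X η by ring]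
  have h2 := expect_mono h0 h1 hp
  rw [expect_sub, expect_smul, expect_add, expect_smul, expect_smul, hEX, hh] at h2
  have eM : 𝐄 ρ (fun η => X η * g η ^ 2) = empMass ρ g - N * (1 - ρ) := by
    have : ∀ n, 𝐄 ρ (fun η => emp η n * g η ^ 2) - (1 - ρ)
        = 𝐄 ρ (fun η => (emp η n - (1 - ρ)) * g η ^ 2) := fun n => by
      have e : (fun η => (emp η n - (1 - ρ)) * g η ^ 2)
          = fun η => emp η n * g η ^ 2 - (1 - ρ) * g η ^ 2 := by funext η; ring
      rw [e, expect_sub, expect_smul, hg, mul_one]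
    unfold empMass
    rw [show (N:ℝ) * (1 - ρ) = ∑ n ∈ range N, (1 - ρ) by simp [mul_sub], ← sum_sub_distrib]
    simp only [this]
    rw [← expect_sum]
    simp only [hX, sum_mul]
  have h4 : m ^ 2 / N * 𝐄 ρ (fun η => X η ^ 2) ≤ K := by
    calc m ^ 2 / N * 𝐄 ρ (fun η => X η ^ 2) ≤ 1 / N * (K * N) := by
          gcongr
          exact expect_nonneg h0 h1 fun η => sq_nonneg _
      _ = K := by field_simp
  rw [eM] at h2
  have h5 := mul_le_mul_of_nonneg_left hv (show (0:ℝ) ≤ 2 * N by positivity)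
  linarith

/-! ### The three models -/

lemma occ_right_zero (η : Config N) (bl br : ℝ) : occAt η bl br ((rs N 0).1 + 2) = br := by
  have := NeZero.pos N
  have h : ¬ ((rs N 0).1 + 2 ≤ N) := by simp [rs]; omega
  simp [occAt, h]

lemma occ_right_succ (η : Config N) (bl br : ℝ) {n : ℕ} (hn : n + 1 < N) :
    occAt η bl br ((rs N (n + 1)).1 + 2) = 1 - emp η n := by
  have h : (rs N (n + 1)).1 + 2 ≤ N := by simp [rs]; omega
  have e : (⟨(rs N (n + 1)).1 + 2 - 1, by omega⟩ : Fin N) = rs N n := by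
    ext; simp [rs]; omega
  simp only [occAt, h, dif_pos, e, emp]
  rw [dif_neg (by omega)]
  split_ifs <;> norm_num

lemma occ_left (η : Config N) (bl br : ℝ) {n : ℕ} (hn : n + 1 < N) :
    occAt η bl br (rs N n).1 = 1 - emp η (n + 1) := by
  have h : (rs N n).1 ≤ N := by simp [rs]; omega
  have h' : (rs N n).1 ≠ 0 := by simp [rs]; omega
  have e : (⟨(rs N n).1 - 1, by omega⟩ : Fin N) = rs N (n + 1) := by
    ext; simp [rs]; omega
  simp only [occAt, h, h', dif_pos, e, emp]
  rw [dif_neg (by simp)]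
  split_ifs <;> norm_num

lemma occ_left_last (η : Config N) (bl br : ℝ) {n : ℕ} (hn : n + 1 = N) :
    occAt η bl br (rs N n).1 = bl := by
  have h : (rs N n).1 = 0 := by simp [rs]; omega
  simp [occAt, h]

/-- Indicator that the left neighbour of the site `rs N n` is occupied, with the boundary value
of the model at the left end; for the East model, which ignores it, it is set to `1`. -/
noncomputable def leftOcc (m : KCM) (η : Config N) (n : ℕ) : ℝ :=
  match m with
  | KCM.east => 1
  | KCM.fa2 => if n + 1 < N then 1 - emp η (n + 1) else 0
  | KCM.fa1 => if n + 1 < N then 1 - emp η (n + 1) else 1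

/-- Indicator that the right neighbour of the site `rs N n` is occupied. -/
noncomputable def rightOcc (η : Config N) : ℕ → ℝ
  | 0 => 0
  | n + 1 => 1 - emp η n

lemma constr_eq (m : KCM) (η : Config N) {n : ℕ} (hn : n < N) :
    constr m η (rs N n) = 1 - leftOcc m η n * rightOcc η n := by
  have hr : ∀ bl, occAt η bl 0 ((rs N n).1 + 2) = rightOcc η n := by
    intro bl
    cases n with
    | zero => rw [occ_right_zero]; rfl
    | succ n => rw [occ_right_succ η bl 0 hn]; rfl
  have hl : ∀ bl, occAt η bl 0 (rs N n).1 = if n + 1 < N then 1 - emp η (n + 1) else bl := by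
    intro bl
    split_ifs with h
    · exact occ_left η bl 0 h
    · exact occ_left_last η bl 0 (by omega)
  cases m <;> simp only [constr, hr, hl, leftOcc, one_mul]

lemma leftOcc_mem (m : KCM) (η : Config N) (n : ℕ) : 0 ≤ leftOcc m η n ∧ leftOcc m η n ≤ 1 := by
  have h1 := emp_nonneg η (n + 1)
  have h2 := emp_le η (n + 1)
  cases m <;> simp only [leftOcc]
  · norm_num
  all_goals split_ifs <;> constructor <;> linarith

lemma rightOcc_mem (η : Config N) (n : ℕ) : 0 ≤ rightOcc η n ∧ rightOcc η n ≤ 1 := by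
  cases n with
  | zero => simp [rightOcc]
  | succ n =>
    have h1 := emp_nonneg η n
    have h2 := emp_le η n
    simp only [rightOcc]
    constructor <;> linarith

lemma constr_nonneg (m : KCM) (η : Config N) {n : ℕ} (hn : n < N) :
    0 ≤ constr m η (rs N n) := by
  rw [constr_eq m η hn]
  have h1 := leftOcc_mem m η n
  have h2 := rightOcc_mem η n
  have := mul_le_one₀ h1.2 h2.1 h2.2
  linarith

lemma constr_le (m : KCM) (η : Config N) {n : ℕ} (hn : n < N) :
    constr m η (rs N n) ≤ 1 := by
  rw [constr_eq m η hn]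
  have := mul_nonneg (leftOcc_mem m η n).1 (rightOcc_mem η n).1
  linarith

lemma indep_constr (m : KCM) {n : ℕ} (hn : n < N) :
    Indep (rs N n) (fun η : Config N => constr m η (rs N n)) := by
  intro η
  simp only [constr_eq m _ hn]
  have hr : rightOcc (flipAt η (rs N n)) n = rightOcc η n := by
    cases n with
    | zero => rfl
    | succ n =>
      have := indep_emp (N := N) (show n < N by omega) hn (by omega) η
      simp only at this
      simp only [rightOcc, this]
  have hl : leftOcc m (flipAt η (rs N n)) n = leftOcc m η n := by
    cases m <;> simp only [leftOcc]
    all_goals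
      split_ifs with h
      · have := indep_emp (N := N) h hn (by omega) η
        simp only at this
        rw [this]
      · rfl
  rw [hr, hl]

/-- All three constraints are weaker than the East one. -/
lemma constr_of_run (m : KCM) (η : Config N) {n : ℕ} (hn : n < N) (h : run η n ≤ 0) :
    constr m η (rs N n) = 1 := by
  have hr : rightOcc η n = 0 := by
    cases n with
    | zero => rfl
    | succ n =>
      have : η (rs N n) = false := by
        by_contra hc
        simp [run, hc] at h
      simp [rightOcc, emp, this]
  rw [constr_eq m η hn, hr]
  ring

lemma rate_bound (h0 : 0 < ρ) (h1 : ρ < 1) (b : Bool) :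
    ρ * (1 - ρ) ≤ if b = true then 1 - ρ else ρ := by
  split_ifs <;> nlinarith

/-- Replacing the rates by `1` in the Dirichlet form costs a bounded factor. -/
lemma sum_constr_le (h0 : 0 < ρ) (h1 : ρ < 1) (m : KCM) (g : Config N → ℝ) :
    ∑ n ∈ range N, 𝐄 ρ (fun η => constr m η (rs N n) * (g (flipAt η (rs N n)) - g η) ^ 2)
      ≤ (ρ * (1 - ρ))⁻¹ * dirichlet m ρ g := by
  have hM : 0 < ρ * (1 - ρ) := mul_pos h0 (by linarith)
  rw [inv_mul_eq_div, le_div_iff₀ hM, dirichlet, sum_rs, sum_mul]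
  refine sum_le_sum fun n hn => ?_
  rw [mul_comm, ← expect_smul]
  refine expect_mono h0 h1 fun η => ?_
  have h2 := constr_nonneg m η (mem_range.1 hn)
  have h3 := rate_bound h0 h1 (η (rs N n))
  have h4 := mul_le_mul_of_nonneg_right h3
    (mul_nonneg h2 (sq_nonneg (g (flipAt η (rs N n)) - g η)))
  rw [crate]
  linarith

lemma sum_runE_le_dirichlet (h0 : 0 < ρ) (h1 : ρ < 1) (m : KCM) (g : Config N → ℝ) :
    ∑ n ∈ range N, runE ρ g 0 n ≤ (ρ * (1 - ρ))⁻¹ * dirichlet m ρ g := by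
  refine le_trans (sum_le_sum fun n hn => expect_mono h0 h1 fun η => ?_)
    (sum_constr_le h0 h1 m g)
  have hn := mem_range.1 hn
  split_ifs with h
  · rw [constr_of_run m η hn h, one_mul]
  · exact mul_nonneg (constr_nonneg m η hn) (sq_nonneg _)

lemma dirichlet_nonneg (h0 : 0 < ρ) (h1 : ρ < 1) (m : KCM) (g : Config N → ℝ) :
    0 ≤ dirichlet m ρ g := by
  have hM : 0 < ρ * (1 - ρ) := mul_pos h0 (by linarith)
  have h := sum_runE_le_dirichlet h0 h1 m g
  have h2 : 0 ≤ ∑ n ∈ range N, runE ρ g 0 n := sum_nonneg fun n _ => runE_nonneg h0 h1 g 0 n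
  by_contra hc
  push Not at hc
  have : (ρ * (1 - ρ))⁻¹ * dirichlet m ρ g < 0 := mul_neg_of_pos_of_neg (inv_pos.2 hM) hc
  linarith

/-- The expected number of facilitated sites per empty site, `1` for East and `1 + ρ` for
FA-1f. -/
noncomputable def facil (m : KCM) (ρ : ℝ) : ℝ :=
  match m with
  | KCM.east => 1
  | _ => 1 + ρ

lemma meanAct_eq (m : KCM) (ρ : ℝ) :
    meanAct m ρ = 2 * ρ * (1 - ρ) * (facil m ρ * (1 - ρ)) := by
  cases m <;> simp only [meanAct, facil] <;> ring

/-- The escape rate is, by local equilibrium, proportional to the number of facilitated sites. -/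
lemma escRate_facilitated (h0 : 0 < ρ) (h1 : ρ < 1) (m : KCM) {δ : ℝ} (hδ : 0 < δ)
    (g : Config N → ℝ) (hg : 𝐄 ρ (fun η => g η ^ 2) = 1) :
    |𝐄 ρ (fun η => g η ^ 2 * escRate m ρ η)
        - 2 * ρ * (1 - ρ) * ∑ n ∈ range N, 𝐄 ρ (fun η => constr m η (rs N n) * g η ^ 2)|
      ≤ N * δ + δ⁻¹ * ((ρ * (1 - ρ))⁻¹ * dirichlet m ρ g) := by
  have e : 𝐄 ρ (fun η => g η ^ 2 * escRate m ρ η)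
      = ∑ n ∈ range N, 𝐄 ρ (fun η =>
        constr m η (rs N n) * (if η (rs N n) = true then 1 - ρ else ρ) * g η ^ 2) := by
    rw [← expect_sum]
    congr 1; funext η
    rw [escRate, sum_rs, mul_sum]
    exact sum_congr rfl fun n _ => by rw [crate]; ring
  rw [e, mul_sum, ← sum_sub_distrib]
  refine (abs_sum_le_sum_abs _ _).trans ?_
  have hb : ∀ n ∈ range N, |𝐄 ρ (fun η =>
        constr m η (rs N n) * (if η (rs N n) = true then 1 - ρ else ρ) * g η ^ 2)
        - 2 * ρ * (1 - ρ) * 𝐄 ρ (fun η => constr m η (rs N n) * g η ^ 2)|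
      ≤ δ + δ⁻¹ * 𝐄 ρ (fun η =>
        constr m η (rs N n) * (g (flipAt η (rs N n)) - g η) ^ 2) := by
    intro n hn
    have hn := mem_range.1 hn
    have h := local_equilibrium_rate h0 h1 hδ (rs N n)
      (F := fun η => constr m η (rs N n)) (fun η => constr_nonneg m η hn)
      (indep_constr m hn) g
    have h2 := expect_weight_le h0 h1 (F := fun η => constr m η (rs N n))
      (fun η => constr_le m η hn) hg
    have h3 := mul_le_mul_of_nonneg_left h2 hδ.le
    linarith
  refine (sum_le_sum hb).trans ?_
  rw [sum_add_distrib, ← mul_sum]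
  have h4 := mul_le_mul_of_nonneg_left (sum_constr_le h0 h1 m g) (inv_pos.2 hδ).le
  simp only [sum_const, card_range, nsmul_eq_mul]
  linarith

/-- The number of facilitated sites is, by local equilibrium, proportional to the number of
empty sites. -/
lemma facilitated_empMass (h0 : 0 < ρ) (h1 : ρ < 1) (m : KCM) {δ : ℝ} (hδ : 0 < δ)
    (hN : 2 ≤ N) (g : Config N → ℝ) (hg : 𝐄 ρ (fun η => g η ^ 2) = 1) :
    |∑ n ∈ range N, 𝐄 ρ (fun η => constr m η (rs N n) * g η ^ 2)
        - facil m ρ * empMass ρ g|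
      ≤ 6 + N * δ + δ⁻¹ * ∑ n ∈ range N, runE ρ g 1 n := by
  obtain ⟨K, hK⟩ : ∃ K, N = K + 2 := ⟨N - 2, by omega⟩
  set e : ℕ → ℝ := fun n => 𝐄 ρ (fun η : Config N => emp η n * g η ^ 2) with he
  set r : ℕ → ℝ := fun n => 𝐄 ρ (fun η => constr m η (rs N n) * g η ^ 2) with hr
  have he0 : ∀ n, 0 ≤ e n := fun n => expect_weight_nonneg h0 h1 g fun η => emp_nonneg η n
  have he1 : ∀ n, e n ≤ 1 := fun n => expect_weight_le h0 h1 (fun η => emp_le η n) hg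
  have hr0 : ∀ n < N, 0 ≤ r n := fun n hn =>
    expect_weight_nonneg h0 h1 g fun η => constr_nonneg m η hn
  have hr1 : ∀ n < N, r n ≤ 1 := fun n hn =>
    expect_weight_le h0 h1 (fun η => constr_le m η hn) hg
  have hsum : ∀ a : ℕ → ℝ, ∑ n ∈ range N, a n
      = ∑ n ∈ range K, a (n + 1) + a 0 + a (K + 1) := fun a => by
    rw [show range N = range (K + 1 + 1) by rw [hK], sum_range_succ, sum_range_succ']
  have hsum0 : ∀ a : ℕ → ℝ, ∑ n ∈ range N, a n
      = ∑ n ∈ range K, a n + a K + a (K + 1) := fun a => by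
    rw [show range N = range (K + 1 + 1) by rw [hK], sum_range_succ, sum_range_succ]
  have hsum2 : ∀ a : ℕ → ℝ, ∑ n ∈ range N, a n
      = ∑ n ∈ range K, a (n + 2) + a 1 + a 0 := fun a => by
    rw [show range N = range (K + 1 + 1) by rw [hK], sum_range_succ', sum_range_succ']
  have hE0 : 0 ≤ ∑ n ∈ range N, runE ρ g 1 n := sum_nonneg fun n _ => runE_nonneg h0 h1 g 1 n
  have hpos : 0 ≤ N * δ + δ⁻¹ * ∑ n ∈ range N, runE ρ g 1 n := by
    have := inv_pos.2 hδ; positivity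
  have hΘ : empMass ρ g = ∑ n ∈ range N, e n := rfl
  have a1 := hr0 0 (by omega)
  have a2 := hr1 0 (by omega)
  have a3 := hr0 (K + 1) (by omega)
  have a4 := hr1 (K + 1) (by omega)
  have b1 := he0 0
  have b2 := he1 0
  have b3 := he0 1
  have b4 := he1 1
  have b5 := he0 K
  have b6 := he1 K
  have b7 := he0 (K + 1)
  have b8 := he1 (K + 1)
  have hfa : (∀ n < K, ∀ η : Config N, constr m η (rs N (n + 1))
      = emp η n + emp η (n + 2) - emp η n * emp η (n + 2)) → facil m ρ = 1 + ρ →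
      |∑ n ∈ range N, r n - facil m ρ * empMass ρ g|
        ≤ 6 + N * δ + δ⁻¹ * ∑ n ∈ range N, runE ρ g 1 n := by
    intro hc hf
    have hb : ∀ n ∈ range K, |r (n + 1) - (e (n + 2) + ρ * e n)|
        ≤ δ + δ⁻¹ * runE ρ g 1 (n + 2) := by
      intro n hn
      have hn := mem_range.1 hn
      have h := local_equilibrium h0 h1 hδ (rs N (n + 2)) (F := fun η => emp η n)
        (fun η => emp_nonneg η n) (indep_emp (by omega) (by omega) (by omega)) g
      set Y := 𝐄 ρ (fun η : Config N =>
        emp η n * ((if η (rs N (n + 2)) = true then 0 else 1) * g η ^ 2)) with hY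
      have h2 : r (n + 1) = e n + e (n + 2) - Y := by
        simp only [hr, he, hY, hc n hn]
        rw [← expect_add, ← expect_sub]
        congr 1; funext η; simp only [emp]; ring
      have h3 : 𝐄 ρ (fun η : Config N => emp η n * (g (flipAt η (rs N (n + 2))) - g η) ^ 2)
          ≤ runE ρ g 1 (n + 2) := by
        refine expect_mono h0 h1 fun η => ?_
        by_cases hη : η (rs N n) = true
        · simp only [emp, hη, if_true, zero_mul]; split_ifs <;> positivity
        · have hrun : run η (n + 1) = 0 := by simp [run, hη]
          have : run η (n + 2) ≤ 1 := by
            rw [run, hrun]; split_ifs <;> simp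
          rw [if_pos this]
          simp [emp, hη]
      have h4 := mul_le_mul_of_nonneg_left h3 (inv_pos.2 hδ).le
      have h5 : δ * e n ≤ δ * 1 := mul_le_mul_of_nonneg_left (he1 n) hδ.le
      change |Y - (1 - ρ) * e n| ≤ δ * e n + _ at h
      rw [h2, show e n + e (n + 2) - Y - (e (n + 2) + ρ * e n) = -(Y - (1 - ρ) * e n) by ring,
        abs_neg]
      linarith
    have hS := (abs_sum_le_sum_abs _ _).trans (sum_le_sum hb)
    rw [sum_sub_distrib, sum_add_distrib, sum_add_distrib, ← mul_sum, ← mul_sum] at hS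
    simp only [sum_const, card_range, nsmul_eq_mul] at hS
    have hz0 := runE_nonneg h0 h1 g 1 0
    have hz1 := runE_nonneg h0 h1 g 1 1
    have c1 := hsum r
    have c2 := hsum0 e
    have c3 := hsum2 e
    have c4 := hsum2 (fun n => runE ρ g 1 n)
    have c5 : (K:ℝ) * δ ≤ N * δ := by
      have : (K:ℝ) ≤ N := by exact_mod_cast (by omega : K ≤ N)
      gcongr
    have c6 : δ⁻¹ * ∑ n ∈ range K, runE ρ g 1 (n + 2)
        ≤ δ⁻¹ * ∑ n ∈ range N, runE ρ g 1 n :=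
      mul_le_mul_of_nonneg_left (by rw [c4]; linarith) (inv_pos.2 hδ).le
    have d1 : 0 ≤ ρ * (e K + e (K + 1)) := by positivity
    have d2 : ρ * (e K + e (K + 1)) ≤ 1 * 2 :=
      mul_le_mul h1.le (by linarith) (by positivity) (by norm_num)
    rw [hf, hΘ]
    have hS' := abs_le.1 hS
    have c2' : ρ * ∑ n ∈ range N, e n = ρ * ∑ n ∈ range K, e n + ρ * (e K + e (K + 1)) := by
      rw [c2]; ring
    rw [abs_le, add_mul, one_mul]
    constructor <;> linarith [hS'.1, hS'.2]
  cases m with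
  | east =>
    have hc : ∀ n ∈ range (K + 1), r (n + 1) = e n := by
      intro n hn
      have hn := mem_range.1 hn
      simp only [hr, he]
      congr 1; funext η
      rw [constr_eq _ η (by omega)]
      simp only [leftOcc, rightOcc]; ring
    have c1 : ∑ n ∈ range N, r n = ∑ n ∈ range (K + 1), e n + r 0 := by
      rw [show range N = range (K + 1 + 1) by rw [hK], sum_range_succ', sum_congr rfl hc]
    have c2 : ∑ n ∈ range N, e n = ∑ n ∈ range (K + 1), e n + e (K + 1) := by
      rw [show range N = range (K + 1 + 1) by rw [hK], sum_range_succ]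
    rw [hΘ, c1, c2, facil, abs_le]
    constructor <;> linarith
  | fa2 =>
    refine hfa (fun n hn η => ?_) rfl
    rw [constr_eq _ η (by omega)]
    simp only [leftOcc, rightOcc, if_pos (show n + 1 + 1 < N by omega)]; ring
  | fa1 =>
    refine hfa (fun n hn η => ?_) rfl
    rw [constr_eq _ η (by omega)]
    simp only [leftOcc, rightOcc, if_pos (show n + 1 + 1 < N by omega)]; ring


/-! ### Linear asymptotics of the generating function -/

lemma facil_mem (h0 : 0 < ρ) (h1 : ρ < 1) (m : KCM) : 1 ≤ facil m ρ ∧ facil m ρ ≤ 2 := by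
  cases m <;> simp only [facil] <;> constructor <;> linarith

/-- Two-sided control of the tilted mean escape rate by the Dirichlet form. In the
upper bound the coefficient of the Dirichlet form is bounded uniformly in `N`; in the lower bound it
also has a term of order `N`, whose constant `C` does not depend on the precision `δ`. -/
lemma escRate_bounds (h0 : 0 < ρ) (h1 : ρ < 1) (m : KCM) :
    ∃ C : ℝ, 0 < C ∧ ∀ δ : ℝ, 0 < δ → ∃ B : ℝ, 0 ≤ B ∧
      ∀ (N : ℕ), 2 ≤ N → ∀ g : Config N → ℝ, 𝐄 ρ (fun η => g η ^ 2) = 1 →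
        0 ≤ dirichlet m ρ g ∧
        𝐄 ρ (fun η => g η ^ 2 * escRate m ρ η)
          ≤ N * (meanAct m ρ + δ) + B * (1 + dirichlet m ρ g) ∧
        N * (meanAct m ρ - δ - C * dirichlet m ρ g) - B * (1 + dirichlet m ρ g)
          ≤ 𝐄 ρ (fun η => g η ^ 2 * escRate m ρ η) := by
  obtain ⟨K, hK, hP⟩ := variance_le h0 h1
  set M := (ρ * (1 - ρ))⁻¹ with hM
  have hM0 : 0 < M := inv_pos.2 (mul_pos h0 (by linarith))
  refine ⟨4 * K * M, by positivity, fun δ hδ => ?_⟩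
  obtain ⟨ε, hε, rfl⟩ : ∃ ε : ℝ, 0 < ε ∧ δ = 6 * ε := ⟨δ / 6, by positivity, by ring⟩
  obtain ⟨k, hk⟩ := exists_nat_one_div_lt hε
  rw [one_div] at hk
  have hε' := inv_pos.2 hε
  have hp1 := pathC_nonneg h0 h1 1
  have hpk := pathC_nonneg h0 h1 k
  refine ⟨6 + 2 * K + ε⁻¹ * M * (1 + pathC ρ 1 + 2 * pathC ρ k), by positivity,
    fun N hN g hg => ?_⟩
  have : NeZero N := ⟨by omega⟩
  have hD := dirichlet_nonneg h0 h1 m g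
  set D := dirichlet m ρ g with hDd
  have hN0 : (0:ℝ) ≤ N := Nat.cast_nonneg N
  have hS := sum_runE_le_dirichlet h0 h1 m g
  rw [← hM, ← hDd] at hS
  have hS1 : ∑ n ∈ range N, runE ρ g 1 n ≤ pathC ρ 1 * (M * D) :=
    (sum_runE_le h0 h1 g 1).trans (mul_le_mul_of_nonneg_left hS hp1)
  have hSk : ∑ n ∈ range N, runE ρ g k n ≤ pathC ρ k * (M * D) :=
    (sum_runE_le h0 h1 g k).trans (mul_le_mul_of_nonneg_left hS hpk)
  have hΘ1 := empMass_le h0 h1 hε k g hg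
  have hΘ2 := le_empMass h0 h1 hK (hP N) g hg
  have hR := abs_le.1 (facilitated_empMass h0 h1 m hε hN g hg)
  have hH := abs_le.1 (escRate_facilitated h0 h1 m hε g hg)
  rw [← hM, ← hDd] at hH
  have hA := meanAct_eq m ρ
  obtain ⟨hf1, hf2⟩ := facil_mem h0 h1 m
  set F := facil m ρ
  set Θ := empMass ρ g
  set R := ∑ n ∈ range N, 𝐄 ρ (fun η => constr m η (rs N n) * g η ^ 2)
  set H := 𝐄 ρ (fun η => g η ^ 2 * escRate m ρ η)
  have hq0 : 0 ≤ 2 * ρ * (1 - ρ) := mul_nonneg (by linarith) (by linarith)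
  have hq1 : 2 * ρ * (1 - ρ) ≤ 1 := by nlinarith [sq_nonneg (2 * ρ - 1)]
  set q := 2 * ρ * (1 - ρ)
  have hqF0 : 0 ≤ q * F := mul_nonneg hq0 (by linarith)
  have hqF : q * F ≤ 2 := by nlinarith
  have scale : ∀ {a b c : ℝ} {x y : ℝ}, 0 ≤ a → a ≤ c → x ≤ y → 0 ≤ y → a * x ≤ c * y :=
    fun ha hac hxy hy => (mul_le_mul_of_nonneg_left hxy ha).trans
      (mul_le_mul_of_nonneg_right hac hy)
  -- the error of the second local equilibrium step
  set E2 := 6 + N * ε + ε⁻¹ * (pathC ρ 1 * (M * D)) with hE2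
  have hE20 : 0 ≤ E2 := by positivity
  have t1 := mul_le_mul_of_nonneg_left hS1 hε'.le
  have r1 : q * (R - F * Θ) ≤ 1 * E2 := scale (b := 0) hq0 hq1 (by linarith [hR.2]) hE20
  have r2 : q * (F * Θ - R) ≤ 1 * E2 := scale (b := 0) hq0 hq1 (by linarith [hR.1]) hE20
  -- the error in the number of empty sites
  have t2 := mul_le_mul_of_nonneg_left hSk hε'.le
  have t3 : N * (1 - ρ + ε + ((k:ℝ) + 1)⁻¹) ≤ N * (1 - ρ) + N * (2 * ε) := by
    rw [← mul_add]; exact mul_le_mul_of_nonneg_left (by linarith) hN0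
  have s1 : q * F * (Θ - N * (1 - ρ)) ≤ 2 * (N * (2 * ε) + ε⁻¹ * (pathC ρ k * (M * D))) :=
    scale (b := 0) hqF0 hqF (by linarith) (by positivity)
  have t4 : 2 * N * (K * ∑ n ∈ range N, runE ρ g 0 n) ≤ 2 * N * (K * (M * D)) := by gcongr
  have s2 : q * F * (N * (1 - ρ) - Θ) ≤ 2 * (2 * N * (K * (M * D)) + K) :=
    scale (b := 0) hqF0 hqF (by linarith) (by positivity)
  have hb1 : 0 ≤ (6 + 2 * K) * D := by positivity
  have hb2 : 0 ≤ ε⁻¹ * M * (1 + pathC ρ 1 + 2 * pathC ρ k) := by positivity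
  have hb3 : 0 ≤ N * ε := by positivity
  have hb4 : 0 ≤ ε⁻¹ * M * (2 * pathC ρ k) * D := by positivity
  rw [hA]
  refine ⟨hD, ?_, ?_⟩
  · linarith [hH.2]
  · linarith [hH.1]

lemma expect_one (N : ℕ) : 𝐄 ρ (fun _ : Config N => (1:ℝ)) = 1 := expect_const 1

lemma dirichlet_const (m : KCM) (N : ℕ) (c : ℝ) :
    dirichlet m ρ (fun _ : Config N => c) = 0 := by
  simp [dirichlet, _root_.expect]

/-- A pointwise upper bound on the variational functional, and the value of the functional at the
constant density, enclose the generating function. -/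
lemma phi_between (m : KCM) {N : ℕ} {lam U : ℝ}
    (hU : ∀ g : Config N → ℝ, 𝐄 ρ (fun η => g η ^ 2) = 1 →
      (Real.exp lam - 1) * 𝐄 ρ (fun η => g η ^ 2 * escRate m ρ η)
        - Real.exp lam * dirichlet m ρ g ≤ U) :
    (Real.exp lam - 1) * 𝐄 ρ (fun η : Config N => escRate m ρ η) ≤ phi m ρ N lam
      ∧ phi m ρ N lam ≤ U := by
  have hup : ∀ x ∈ { x | ∃ f : Config N → ℝ, (∀ η, 0 ≤ f η) ∧ 𝐄 ρ f = 1 ∧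
      x = (Real.exp lam - 1) * 𝐄 ρ (fun η => f η * escRate m ρ η)
        - Real.exp lam * dirichlet m ρ (fun η => Real.sqrt (f η)) }, x ≤ U := by
    rintro x ⟨f, hf, hf1, rfl⟩
    have h := hU (fun η => Real.sqrt (f η))
    simp only [Real.sq_sqrt (hf _)] at h
    exact h hf1
  have hone : (Real.exp lam - 1) * 𝐄 ρ (fun η : Config N => escRate m ρ η) ∈
      { x | ∃ f : Config N → ℝ, (∀ η, 0 ≤ f η) ∧ 𝐄 ρ f = 1 ∧
      x = (Real.exp lam - 1) * 𝐄 ρ (fun η => f η * escRate m ρ η)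
        - Real.exp lam * dirichlet m ρ (fun η => Real.sqrt (f η)) } :=
    ⟨fun _ => 1, fun _ => zero_le_one, expect_one N, by simp [dirichlet_const]⟩
  exact ⟨le_csSup ⟨U, hup⟩ hone, csSup_le ⟨_, hone⟩ hup⟩

lemma tendsto_exp_scaled (α : ℝ) :
    Tendsto (fun N : ℕ => Real.exp (α / N)) atTop (nhds 1) := by
  have := (Real.continuous_exp.tendsto 0).comp (tendsto_const_div_atTop_nhds_zero_nat α)
  rwa [Real.exp_zero] at this

/-- `N (e^{α/N} - 1) → α`. -/
lemma tendsto_mul_exp_sub (α : ℝ) :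
    Tendsto (fun N : ℕ => (N:ℝ) * (Real.exp (α / N) - 1)) atTop (nhds α) := by
  have hd : HasDerivAt (fun t : ℝ => Real.exp (α * t)) α 0 := by
    simpa using ((hasDerivAt_id (0:ℝ)).const_mul α).exp
  have ht : Tendsto (fun N : ℕ => ((N:ℝ))⁻¹) atTop (nhdsWithin 0 {0}ᶜ) :=
    tendsto_nhdsWithin_iff.2 ⟨tendsto_inv_atTop_nhds_zero_nat, by
      filter_upwards [eventually_gt_atTop 0] with N hN
      have : (N:ℝ) ≠ 0 := by positivity
      simpa using this⟩
  have := hd.tendsto_slope_zero.comp ht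
  refine this.congr fun N => ?_
  simp [div_eq_mul_inv]

/-- The generating function is squeezed: both bounds come from `escRate_bounds`, the Dirichlet
form being absorbed by the term `-e^λ 𝒟`. For `α < 0` this absorption needs `-α C < 1`. -/
lemma tendsto_phi (h0 : 0 < ρ) (h1 : ρ < 1) (m : KCM) : ∃ α₀ : ℝ, α₀ < 0 ∧ ∀ α : ℝ, α₀ < α →
    Tendsto (fun N : ℕ => phi m ρ N (α / N)) atTop (nhds (meanAct m ρ * α)) := by
  obtain ⟨C, hC, hmain⟩ := escRate_bounds h0 h1 m
  refine ⟨-C⁻¹, by simpa using hC, fun α hα => ?_⟩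
  have hαC : 0 < 1 + α * C := by
    have := mul_lt_mul_of_pos_right hα hC
    rw [neg_mul, inv_mul_cancel₀ hC.ne'] at this
    linarith
  set A := meanAct m ρ with hA
  rw [Metric.tendsto_atTop']
  suffices h : ∀ ε > 0, ∀ᶠ N : ℕ in atTop, dist (phi m ρ N (α / N)) (A * α) < ε by
    intro ε hε
    obtain ⟨N₀, h'⟩ := eventually_atTop.1 (h ε hε)
    exact ⟨N₀, fun N hN => h' N hN.le⟩
  intro ε hε
  set δ := ε / (2 * (|α| + 1)) with hδ
  have hα1 : 0 < |α| + 1 := by positivity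
  have hδ0 : 0 < δ := by positivity
  have hδα : δ * |α| < ε := by
    have : δ * (|α| + 1) = ε / 2 := by rw [hδ]; field_simp
    nlinarith
  obtain ⟨B, hB, hb⟩ := hmain δ hδ0
  have T1 := tendsto_exp_scaled α
  have T2 := tendsto_mul_exp_sub α
  have T0 : Tendsto (fun N : ℕ => Real.exp (α / N) - 1) atTop (nhds 0) := by
    simpa using T1.sub_const 1
  -- the common form of all four error bounds
  have T3 : ∀ a b : ℝ, Tendsto (fun N : ℕ => (Real.exp (α / N) - 1) * (N * a + b)) atTop
      (nhds (α * a)) := fun a b => by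
    have := (T2.mul_const a).add (T0.mul_const b)
    simp only [zero_mul, add_zero] at this
    exact this.congr fun N => by ring
  have hlow : ∀ᶠ N : ℕ in atTop, |(Real.exp (α / N) - 1) * 𝐄 ρ (fun η : Config N => escRate m ρ η)
      - A * α| < ε := by
    have l1 := abs_lt.1 (show |α * δ| < ε by rw [abs_mul, abs_of_pos hδ0]; linarith)
    have e1 := (T3 (A + δ) B).eventually (Ioo_mem_nhds (show A * α - ε < α * (A + δ) by linarith)
      (show α * (A + δ) < A * α + ε by linarith))
    have e2 := (T3 (A - δ) (-B)).eventually
      (Ioo_mem_nhds (show A * α - ε < α * (A - δ) by linarith)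
      (show α * (A - δ) < A * α + ε by linarith))
    filter_upwards [e1, e2, eventually_ge_atTop 2] with N e1 e2 hN
    obtain ⟨-, u1, u2⟩ := hb N hN (fun _ => 1) (by simpa using expect_one N)
    simp only [dirichlet_const, one_pow, one_mul, mul_zero, add_zero, sub_zero, mul_one] at u1 u2
    rw [abs_lt]
    rcases le_total 0 (Real.exp (α / N) - 1) with hs | hs
    · have v1 := mul_le_mul_of_nonneg_left u1 hs
      have v2 := mul_le_mul_of_nonneg_left u2 hs
      constructor <;> linarith [e1.1, e1.2, e2.1, e2.2]
    · have v1 := mul_le_mul_of_nonpos_left u1 hs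
      have v2 := mul_le_mul_of_nonpos_left u2 hs
      constructor <;> linarith [e1.1, e1.2, e2.1, e2.2]
  have hup : ∀ᶠ N : ℕ in atTop, ∃ U < A * α + ε, ∀ g : Config N → ℝ,
      𝐄 ρ (fun η => g η ^ 2) = 1 →
      (Real.exp (α / N) - 1) * 𝐄 ρ (fun η => g η ^ 2 * escRate m ρ η)
        - Real.exp (α / N) * dirichlet m ρ g ≤ U := by
    rcases le_or_gt 0 α with hα0 | hα0
    · rw [abs_of_nonneg hα0] at hδα
      have e1 := (T3 (A + δ) B).eventually
        (gt_mem_nhds (show α * (A + δ) < A * α + ε by linarith))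
      have e2 := (T0.mul_const B).eventually (gt_mem_nhds (show 0 * B < 1 by linarith))
      filter_upwards [e1, e2, eventually_ge_atTop 2] with N e1 e2 hN
      refine ⟨_, e1, fun g hg => ?_⟩
      obtain ⟨hD, u, -⟩ := hb N hN g hg
      have hs : 0 ≤ Real.exp (α / N) - 1 := by
        have := Real.one_le_exp (show 0 ≤ α / N by positivity)
        linarith
      have v := mul_le_mul_of_nonneg_left u hs
      have w : 0 ≤ (Real.exp (α / N) - (Real.exp (α / N) - 1) * B) * dirichlet m ρ g :=
        mul_nonneg (by linarith) hD
      linarith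
    · rw [abs_of_neg hα0] at hδα
      have e1 := (T3 (A - δ) (-B)).eventually
        (gt_mem_nhds (show α * (A - δ) < A * α + ε by linarith))
      have e2 := (T1.add (T3 C B)).eventually (lt_mem_nhds hαC)
      filter_upwards [e1, e2, eventually_ge_atTop 2] with N e1 e2 hN
      refine ⟨_, e1, fun g hg => ?_⟩
      obtain ⟨hD, -, u⟩ := hb N hN g hg
      have hs : Real.exp (α / N) - 1 ≤ 0 := by
        have := Real.exp_le_one_iff.2
          (show α / N ≤ 0 from div_nonpos_of_nonpos_of_nonneg hα0.le (Nat.cast_nonneg N))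
        linarith
      have v := mul_le_mul_of_nonpos_left u hs
      have w := mul_nonneg e2.le hD
      linarith
  filter_upwards [hlow, hup] with N hlow ⟨U, hU, hg⟩
  obtain ⟨p1, p2⟩ := phi_between m hg
  rw [Real.dist_eq, abs_lt]
  constructor <;> linarith [(abs_lt.1 hlow).1]

end Tools

/-- **Theorem 2.1(i)** (active-regime linearity). For each of the 1d East model,
FA-1f with two empty boundaries and FA-1f with one empty (right) boundary, at any
density `ρ ∈ (0,1)`, there is `α₀ < 0` such that for every `α > α₀` the rescaled
generating function satisfies `limsup_N φ^{(N)}(α/N) = 𝔸·α`, and in this regime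
the limit in `N` exists and equals `𝔸·α`. -/
theorem active_regime_linearity_1d (ρ : ℝ) (hρ0 : 0 < ρ) (hρ1 : ρ < 1) :
    ∀ m : KCM, ∃ α₀ : ℝ, α₀ < 0 ∧ ∀ α : ℝ, α₀ < α →
      Filter.Tendsto (fun N : ℕ => phi m ρ N (α / N)) Filter.atTop
        (nhds (meanAct m ρ * α)) ∧
      Filter.limsup (fun N : ℕ => phi m ρ N (α / N)) Filter.atTop
        = meanAct m ρ * α := by
  intro m
  obtain ⟨α₀, h, hα⟩ := tendsto_phi hρ0 hρ1 m
  exact ⟨α₀, h, fun α ha => ⟨hα α ha, (hα α ha).limsup_eq⟩⟩
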